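/- arXiv:0709.4332 — 2 statements merged into one kernel-verified Lean document; each statement's English description precedes it below -/
import Mathlib

section
/- Let 0 ≤ ε < 1 and let I be a nondegenerate bounded interval. Then for every φ ∈ BMO_ε(I), the function e^φ is integrable on I and ⟨e^φ⟩_I ≤ (e^{−ε}/(1−ε))·e^{⟨φ⟩_I}. -/
open MeasureTheory Real

/-- The average of `φ` over the interval with endpoints `a`, `b`. -/
noncomputable def avg (φ : ℝ → ℝ) (a b : ℝ) : ℝ := (∫ t in a..b, φ t) / (b - a)

/-- `φ ∈ BMO_ε([a,b])`: `φ` and `φ²` are integrable on `[a,b]` and the mean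
oscillation `⟨φ²⟩_J − ⟨φ⟩_J²` is at most `ε²` on every nondegenerate
subinterval `J = [c,d] ⊆ [a,b]`. -/
def BMOe (ε a b : ℝ) (φ : ℝ → ℝ) : Prop :=
  IntervalIntegrable φ volume a b ∧
  IntervalIntegrable (fun t => (φ t) ^ 2) volume a b ∧
  ∀ c d : ℝ, a ≤ c → c < d → d ≤ b →
    avg (fun t => (φ t) ^ 2) c d - (avg φ c d) ^ 2 ≤ ε ^ 2

/-!
Bellman function method of Slavin and Vasyunin. On the strip `0 ≤ y - x² ≤ δ²` there is an explicit
function `B` with `B(x, x²) = eˣ` and `B(x, y) ≤ e^(-δ) / (1 - δ) * eˣ` whose graph lies below its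
tangent plane at `(x, y)`, except possibly over points of the strip whose abscissa is much larger
than `x`. Given `ε < δ < 1` and `φ ∈ BMO_ε`, every interval can be cut into two pieces of comparable
length whose Bellman points `(⟨φ⟩, ⟨φ²⟩)` avoid this exceptional region, so that the length-weighted
sum of `B` over the pieces never exceeds its value on the interval.
Iterating the cut, the pieces shrink to points, their Bellman points converge to `(φ, φ²)` almost
everywhere by Lebesgue's differentiation theorem, and Fatou's lemma bounds the integral of `e^φ`.
Finally `δ` decreases to `ε`.
-/

section

open Set Filter
open scoped Topology ENNReal

section Average

variable {f : ℝ → ℝ} {a b c d τ : ℝ}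

lemma avg_eq_intervalAverage (f : ℝ → ℝ) (a b : ℝ) : avg f a b = ⨍ t in a..b, f t :=
  (interval_average_eq_div f a b).symm

lemma sub_mul_avg (f : ℝ → ℝ) (a b : ℝ) : (b - a) * avg f a b = ∫ t in a..b, f t := by
  obtain rfl | hab := eq_or_ne a b
  · simp
  · exact mul_div_cancel₀ _ (sub_ne_zero.2 hab.symm)

lemma sub_mul_avg_add_adjacent (hf : IntervalIntegrable f volume c τ)
    (hf' : IntervalIntegrable f volume τ d) :
    (τ - c) * avg f c τ + (d - τ) * avg f τ d = (d - c) * avg f c d := by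
  simp only [sub_mul_avg, intervalIntegral.integral_add_adjacent_intervals hf hf']

lemma avg_right_le_avg (hcτ : c < τ) (hτd : τ < d) (hf : IntervalIntegrable f volume c τ)
    (hf' : IntervalIntegrable f volume τ d) (h : avg f c d ≤ avg f c τ) :
    avg f τ d ≤ avg f c d := by
  have hadd := sub_mul_avg_add_adjacent hf hf'
  have hleft := mul_le_mul_of_nonneg_left h (sub_pos.2 hcτ).le
  exact le_of_mul_le_mul_left (by linarith) (sub_pos.2 hτd)

lemma sq_avg_le_avg_sq (hab : a < b) (hf : IntervalIntegrable f volume a b)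
    (hf2 : IntervalIntegrable (fun t => f t ^ 2) volume a b) :
    avg f a b ^ 2 ≤ avg (fun t => f t ^ 2) a b := by
  simp only [avg_eq_intervalAverage]
  refine (even_two.convexOn_pow (𝕜 := ℝ)).map_set_average_le (continuous_pow 2).continuousOn
    isClosed_univ ?_ ?_ (Eventually.of_forall fun _ => mem_univ _) hf.def' hf2.def'
  · simp [uIoc_of_le hab.le, hab]
  · simp [uIoc_of_le hab.le]

lemma continuousOn_avg (hf : IntervalIntegrable f volume a b) :
    ContinuousOn (avg f a) (Ioc a b) := by
  refine ContinuousOn.div ?_ (by fun_prop) fun t ht => (sub_pos.2 ht.1).ne'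
  exact (intervalIntegral.continuousOn_primitive_interval' hf left_mem_uIcc).mono
    (Ioc_subset_Icc_self.trans Icc_subset_uIcc)

lemma avg_indicator_Ioc (hac : a ≤ c) (hcd : c ≤ d) (hdb : d ≤ b) :
    avg ((Ioc a b).indicator f) c d = avg f c d := by
  unfold avg
  rw [intervalIntegral.integral_of_le hcd, intervalIntegral.integral_of_le hcd]
  congr 1
  exact setIntegral_congr_fun measurableSet_Ioc fun t ht =>
    indicator_of_mem (Ioc_subset_Ioc hac hdb ht) f

lemma avg_eq_average_closedBall (hab : a ≤ b) :
    avg f a b = ⨍ t in Metric.closedBall ((a + b) / 2) ((b - a) / 2), f t := by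
  rw [avg_eq_intervalAverage, uIoc_of_le hab, ← Real.Icc_eq_closedBall]
  exact setAverage_congr Ioc_ae_eq_Icc

lemma mul_sq_sub_mean_le_mul_variance {α β p q r P Q R : ℝ} (hα : 0 < α) (hβ : 0 < β)
    (hr : α * p + β * q = (α + β) * r) (hR : α * P + β * Q = (α + β) * R)
    (hP : p ^ 2 ≤ P) (hQ : q ^ 2 ≤ Q) : β * (q - r) ^ 2 ≤ α * (R - r ^ 2) := by
  have hdev : (α + β) * (q - r) = α * (q - p) := by linear_combination hr
  have hvar : α * β * (q - p) ^ 2 ≤ (α + β) ^ 2 * (R - r ^ 2) := by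
    have hpP := mul_le_mul_of_nonneg_left hP (mul_pos (add_pos hα hβ) hα).le
    have hqQ := mul_le_mul_of_nonneg_left hQ (mul_pos (add_pos hα hβ) hβ).le
    calc α * β * (q - p) ^ 2
        = (α + β) * α * p ^ 2 + (α + β) * β * q ^ 2 - (α * p + β * q) ^ 2 := by ring
      _ ≤ (α + β) * α * P + (α + β) * β * Q - (α * p + β * q) ^ 2 := by linarith
      _ = (α + β) ^ 2 * (R - r ^ 2) := by rw [hr]; linear_combination (α + β) * hR
  refine le_of_mul_le_mul_left ?_ (pow_pos (add_pos hα hβ) 2)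
  calc (α + β) ^ 2 * (β * (q - r) ^ 2)
      = β * ((α + β) * (q - r)) ^ 2 := by ring
    _ = α * (α * β * (q - p) ^ 2) := by rw [hdev]; ring
    _ ≤ α * ((α + β) ^ 2 * (R - r ^ 2)) := mul_le_mul_of_nonneg_left hvar hα.le
    _ = (α + β) ^ 2 * (α * (R - r ^ 2)) := by ring

end Average

section BMO

variable {ε a b c d τ : ℝ} {φ : ℝ → ℝ}

namespace BMOe

lemma mono (hφ : BMOe ε a b φ) (hac : a ≤ c) (hcd : c < d) (hdb : d ≤ b) : BMOe ε c d φ := by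
  have hsub : uIcc c d ⊆ uIcc a b := by
    rw [uIcc_of_le hcd.le]
    exact (Icc_subset_Icc hac hdb).trans Icc_subset_uIcc
  exact ⟨hφ.1.mono_set hsub, hφ.2.1.mono_set hsub, fun u v hu huv hv =>
    hφ.2.2 u v (hac.trans hu) huv (hv.trans hdb)⟩

lemma sq_avg_le (hφ : BMOe ε a b φ) (hab : a < b) :
    avg φ a b ^ 2 ≤ avg (fun t => φ t ^ 2) a b :=
  sq_avg_le_avg_sq hab hφ.1 hφ.2.1

lemma avg_sq_sub_sq_avg_le (hφ : BMOe ε a b φ) (hab : a < b) :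
    avg (fun t => φ t ^ 2) a b - avg φ a b ^ 2 ≤ ε ^ 2 :=
  hφ.2.2 a b le_rfl hab le_rfl

lemma sub_mul_avg_add (hφ : BMOe ε a b φ) (haτ : a < τ) (hτb : τ < b) :
    (τ - a) * avg φ a τ + (b - τ) * avg φ τ b = (b - a) * avg φ a b :=
  sub_mul_avg_add_adjacent (hφ.mono le_rfl haτ hτb.le).1 (hφ.mono haτ.le hτb le_rfl).1

lemma sub_mul_avg_sq_add (hφ : BMOe ε a b φ) (haτ : a < τ) (hτb : τ < b) :
    (τ - a) * avg (fun t => φ t ^ 2) a τ + (b - τ) * avg (fun t => φ t ^ 2) τ b =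
      (b - a) * avg (fun t => φ t ^ 2) a b :=
  sub_mul_avg_add_adjacent (hφ.mono le_rfl haτ hτb.le).2.1 (hφ.mono haτ.le hτb le_rfl).2.1

lemma sq_avg_right_sub_avg_le (hφ : BMOe ε a b φ) (haτ : a < τ) (hτb : τ < b) :
    (b - τ) * (avg φ τ b - avg φ a b) ^ 2 ≤ (τ - a) * ε ^ 2 := by
  have hdev : (b - τ) * (avg φ τ b - avg φ a b) ^ 2 ≤
      (τ - a) * (avg (fun t => φ t ^ 2) a b - avg φ a b ^ 2) := mul_sq_sub_mean_le_mul_variance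
    (sub_pos.2 haτ) (sub_pos.2 hτb) (by linarith [hφ.sub_mul_avg_add haτ hτb])
    (by linarith [hφ.sub_mul_avg_sq_add haτ hτb])
    ((hφ.mono le_rfl haτ hτb.le).sq_avg_le haτ) ((hφ.mono haτ.le hτb le_rfl).sq_avg_le hτb)
  exact hdev.trans <| mul_le_mul_of_nonneg_left (hφ.avg_sq_sub_sq_avg_le (haτ.trans hτb))
    (sub_pos.2 haτ).le

lemma sq_avg_left_sub_avg_le (hφ : BMOe ε a b φ) (haτ : a < τ) (hτb : τ < b) :
    (τ - a) * (avg φ a τ - avg φ a b) ^ 2 ≤ (b - τ) * ε ^ 2 := by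
  have hdev : (τ - a) * (avg φ a τ - avg φ a b) ^ 2 ≤
      (b - τ) * (avg (fun t => φ t ^ 2) a b - avg φ a b ^ 2) := mul_sq_sub_mean_le_mul_variance
    (sub_pos.2 hτb) (sub_pos.2 haτ) (by linarith [hφ.sub_mul_avg_add haτ hτb])
    (by linarith [hφ.sub_mul_avg_sq_add haτ hτb])
    ((hφ.mono haτ.le hτb le_rfl).sq_avg_le hτb) ((hφ.mono le_rfl haτ hτb.le).sq_avg_le haτ)
  exact hdev.trans <| mul_le_mul_of_nonneg_left (hφ.avg_sq_sub_sq_avg_le (haτ.trans hτb))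
    (sub_pos.2 hτb).le

lemma avg_right_le_add {σ : ℝ} (hφ : BMOe ε a b φ) (haτ : a < τ) (hτb : τ < b) (hσ : 0 ≤ σ)
    (h : (τ - a) * ε ^ 2 ≤ (b - τ) * σ ^ 2) : avg φ τ b ≤ avg φ a b + σ := by
  have hdev := (hφ.sq_avg_right_sub_avg_le haτ hτb).trans h
  have habs := abs_le_of_sq_le_sq (le_of_mul_le_mul_left hdev (sub_pos.2 hτb)) hσ
  exact sub_le_iff_le_add'.1 (le_of_abs_le habs)

lemma avg_left_le_add {σ : ℝ} (hφ : BMOe ε a b φ) (haτ : a < τ) (hτb : τ < b) (hσ : 0 ≤ σ)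
    (h : (b - τ) * ε ^ 2 ≤ (τ - a) * σ ^ 2) : avg φ a τ ≤ avg φ a b + σ := by
  have hdev := (hφ.sq_avg_left_sub_avg_le haτ hτb).trans h
  have habs := abs_le_of_sq_le_sq (le_of_mul_le_mul_left hdev (sub_pos.2 haτ)) hσ
  exact sub_le_iff_le_add'.1 (le_of_abs_le habs)

/- If one of the two cuts at relative distance `θ` from an end gives the short piece an average at
most `⟨φ⟩`, or the long piece one at least `⟨φ⟩`, then the long piece exceeds `⟨φ⟩` by at most `σ`;
otherwise the average over `[a, τ]` crosses `⟨φ⟩` between these cuts. -/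
lemma exists_split {σ θ : ℝ} (hφ : BMOe ε a b φ) (hab : a < b) (hσ : 0 ≤ σ) (hθ0 : 0 < θ)
    (hθ : θ ≤ 1 / 2) (hθσ : θ * ε ^ 2 ≤ (1 - θ) * σ ^ 2) :
    ∃ τ ∈ Icc (a + θ * (b - a)) (b - θ * (b - a)),
      avg φ a τ ≤ avg φ a b + σ ∧ avg φ τ b ≤ avg φ a b + σ := by
  have hlen : 0 < b - a := sub_pos.2 hab
  have hshort : 0 < θ * (b - a) := mul_pos hθ0 hlen
  have hθlen : θ * (b - a) ≤ 1 / 2 * (b - a) := mul_le_mul_of_nonneg_right hθ hlen.le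
  have hweights : θ * (b - a) * ε ^ 2 ≤ (b - a - θ * (b - a)) * σ ^ 2 := by
    linarith [mul_le_mul_of_nonneg_right hθσ hlen.le]
  have right_le {τ : ℝ} (haτ : a < τ) (hτb : τ < b) (h : avg φ a b ≤ avg φ a τ) :
      avg φ τ b ≤ avg φ a b :=
    avg_right_le_avg haτ hτb (hφ.mono le_rfl haτ hτb.le).1 (hφ.mono haτ.le hτb le_rfl).1 h
  set τ₁ := a + θ * (b - a) with hτ₁
  set τ₂ := b - θ * (b - a) with hτ₂
  have haτ₁ : a < τ₁ := by linarith
  have hτ₁₂ : τ₁ ≤ τ₂ := by linarith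
  have hτ₂b : τ₂ < b := by linarith
  rcases le_or_gt (avg φ a τ₁) (avg φ a b) with hleft | hleft
  · refine ⟨τ₁, left_mem_Icc.2 hτ₁₂, by linarith,
      hφ.avg_right_le_add haτ₁ (hτ₁₂.trans_lt hτ₂b) hσ ?_⟩
    convert hweights using 2 <;> rw [hτ₁] <;> ring
  rcases le_or_gt (avg φ a b) (avg φ a τ₂) with hright | hright
  · refine ⟨τ₂, right_mem_Icc.2 hτ₁₂, hφ.avg_left_le_add (haτ₁.trans_le hτ₁₂) hτ₂b hσ ?_, ?_⟩
    · convert hweights using 2 <;> rw [hτ₂] <;> ring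
    · linarith [right_le (haτ₁.trans_le hτ₁₂) hτ₂b hright]
  have hcont : ContinuousOn (avg φ a) (Icc τ₁ τ₂) :=
    (continuousOn_avg hφ.1).mono fun t ht => ⟨haτ₁.trans_le ht.1, ht.2.trans hτ₂b.le⟩
  obtain ⟨τ, hτ, hτavg⟩ := intermediate_value_Icc' hτ₁₂ hcont ⟨hright.le, hleft.le⟩
  have := right_le (haτ₁.trans_le hτ.1) (hτ.2.trans_lt hτ₂b) hτavg.ge
  exact ⟨τ, hτ, by linarith, by linarith⟩

end BMOe

end BMO

section Bellman

variable {δ m s t x y x₁ y₁ x₂ y₂ α β : ℝ}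

/-- The Bellman function of the integral John–Nirenberg inequality on the strip
`x ^ 2 ≤ y ≤ x ^ 2 + δ ^ 2`: the extremal value of `⟨e^φ⟩` over `φ ∈ BMO_δ` with `⟨φ⟩ = x` and
`⟨φ²⟩ = y`. Above the strip the square root takes the junk value `0`. -/
noncomputable def bellman (δ x y : ℝ) : ℝ :=
  (1 - √(δ ^ 2 - (y - x ^ 2))) / (1 - δ) * Real.exp (x + √(δ ^ 2 - (y - x ^ 2)) - δ)

/-- The affine function of `(x, y)` that agrees with `bellman δ` on the extremal segment: the part
over `m - δ ≤ x ≤ m` of the line tangent to the upper boundary `y = x ^ 2 + δ ^ 2` at `x = m`. -/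
noncomputable def bellmanTangent (δ m x y : ℝ) : ℝ :=
  Real.exp (m - δ) / (1 - δ) * ((y - δ ^ 2) / 2 + (1 - m) * x + 1 - m + m ^ 2 / 2)

lemma hasDerivAt_exp_mul_quadratic (s t : ℝ) :
    HasDerivAt (fun t => Real.exp t * ((t ^ 2 - s ^ 2) / 2 + 1 - t))
      (Real.exp t * ((t ^ 2 - s ^ 2) / 2)) t := by
  have hquad : HasDerivAt (fun t : ℝ => (t ^ 2 - s ^ 2) / 2 + 1 - t) (t - 1) t := by
    refine (((((hasDerivAt_id t).pow 2).sub_const (s ^ 2)).div_const 2).add_const 1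
      |>.sub (hasDerivAt_id t)).congr_deriv ?_
    simp
  exact ((Real.hasDerivAt_exp t).mul hquad).congr_deriv (by ring)

lemma exp_mul_one_sub_le_exp_mul_quadratic (hs : 0 ≤ s) (ht : -s ≤ t) :
    Real.exp s * (1 - s) ≤ Real.exp t * ((t ^ 2 - s ^ 2) / 2 + 1 - t) := by
  set g := fun t => Real.exp t * ((t ^ 2 - s ^ 2) / 2 + 1 - t) with hg
  have hcont : Continuous g := by fun_prop
  have hdiff : Differentiable ℝ g := fun x => (hasDerivAt_exp_mul_quadratic s x).differentiableAt
  have hderiv (x : ℝ) : deriv g x = Real.exp x * ((x ^ 2 - s ^ 2) / 2) :=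
    (hasDerivAt_exp_mul_quadratic s x).deriv
  suffices g s ≤ g t by simpa [hg] using this
  rcases le_total t s with hts | hst
  · have hanti : AntitoneOn g (Icc (-s) s) := by
      refine antitoneOn_of_deriv_nonpos (convex_Icc _ _) hcont.continuousOn hdiff.differentiableOn
        fun x hx => ?_
      rw [interior_Icc] at hx
      rw [hderiv]
      have : x ^ 2 ≤ s ^ 2 := sq_le_sq' hx.1.le hx.2.le
      exact mul_nonpos_of_nonneg_of_nonpos (Real.exp_pos x).le (by linarith)
    exact hanti ⟨ht, hts⟩ (right_mem_Icc.2 (by linarith)) hts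
  · have hmono : MonotoneOn g (Ici s) := by
      refine monotoneOn_of_deriv_nonneg (convex_Ici _) hcont.continuousOn hdiff.differentiableOn
        fun x hx => ?_
      rw [interior_Ici, mem_Ioi] at hx
      rw [hderiv]
      have : s ^ 2 ≤ x ^ 2 := pow_le_pow_left₀ hs hx.le 2
      exact mul_nonneg (Real.exp_pos x).le (by linarith)
    exact hmono self_mem_Ici hst hst

lemma bellman_le_bellmanTangent (hδ : δ < 1) (hy : y - x ^ 2 ≤ δ ^ 2)
    (hm : x ≤ m + √(δ ^ 2 - (y - x ^ 2))) : bellman δ x y ≤ bellmanTangent δ m x y := by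
  unfold bellman bellmanTangent
  set s := √(δ ^ 2 - (y - x ^ 2))
  have hs_sq : s ^ 2 = δ ^ 2 - (y - x ^ 2) := Real.sq_sqrt (by linarith)
  have hmin := exp_mul_one_sub_le_exp_mul_quadratic (Real.sqrt_nonneg _ : 0 ≤ s)
    (by linarith : -s ≤ m - x)
  have hfactor : 0 ≤ Real.exp (x - δ) / (1 - δ) :=
    div_nonneg (Real.exp_pos _).le (sub_pos.2 hδ).le
  calc (1 - s) / (1 - δ) * Real.exp (x + s - δ)
      = Real.exp (x - δ) / (1 - δ) * (Real.exp s * (1 - s)) := by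
        rw [show x + s - δ = x - δ + s by ring, Real.exp_add]; ring
    _ ≤ Real.exp (x - δ) / (1 - δ) *
          (Real.exp (m - x) * (((m - x) ^ 2 - s ^ 2) / 2 + 1 - (m - x))) :=
        mul_le_mul_of_nonneg_left hmin hfactor
    _ = _ := by
        rw [show m - δ = x - δ + (m - x) by ring, Real.exp_add, hs_sq]; ring

lemma bellman_eq_bellmanTangent (hy : y - x ^ 2 ≤ δ ^ 2) :
    bellman δ x y = bellmanTangent δ (x + √(δ ^ 2 - (y - x ^ 2))) x y := by
  unfold bellman bellmanTangent
  set s := √(δ ^ 2 - (y - x ^ 2))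
  have hs_sq : s ^ 2 = δ ^ 2 - (y - x ^ 2) := Real.sq_sqrt (by linarith)
  linear_combination -Real.exp (x + s - δ) / (1 - δ) / 2 * hs_sq

lemma bellmanTangent_add (hx : α * x₁ + β * x₂ = (α + β) * x)
    (hy : α * y₁ + β * y₂ = (α + β) * y) :
    α * bellmanTangent δ m x₁ y₁ + β * bellmanTangent δ m x₂ y₂ =
      (α + β) * bellmanTangent δ m x y := by
  unfold bellmanTangent
  linear_combination Real.exp (m - δ) / (1 - δ) * (hy / 2 + (1 - m) * hx)

lemma bellman_add_le (hδ : δ < 1) (hα : 0 ≤ α) (hβ : 0 ≤ β)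
    (hx : α * x₁ + β * x₂ = (α + β) * x) (hy : α * y₁ + β * y₂ = (α + β) * y)
    (hV : y - x ^ 2 ≤ δ ^ 2) (hV₁ : y₁ - x₁ ^ 2 ≤ δ ^ 2) (hV₂ : y₂ - x₂ ^ 2 ≤ δ ^ 2)
    (hx₁ : x₁ ≤ x + √(δ ^ 2 - (y - x ^ 2))) (hx₂ : x₂ ≤ x + √(δ ^ 2 - (y - x ^ 2))) :
    α * bellman δ x₁ y₁ + β * bellman δ x₂ y₂ ≤ (α + β) * bellman δ x y := by
  rw [bellman_eq_bellmanTangent hV, ← bellmanTangent_add hx hy]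
  gcongr
  · exact bellman_le_bellmanTangent hδ hV₁ (le_add_of_le_of_nonneg hx₁ (Real.sqrt_nonneg _))
  · exact bellman_le_bellmanTangent hδ hV₂ (le_add_of_le_of_nonneg hx₂ (Real.sqrt_nonneg _))

lemma bellman_nonneg (hδ0 : 0 ≤ δ) (hδ : δ < 1) (hxy : x ^ 2 ≤ y) : 0 ≤ bellman δ x y := by
  have hs : √(δ ^ 2 - (y - x ^ 2)) ≤ δ := (Real.sqrt_le_left hδ0).2 (by linarith)
  exact mul_nonneg (div_nonneg (by linarith) (by linarith)) (Real.exp_pos _).le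

lemma bellman_le_mul_exp (hδ : δ < 1) :
    bellman δ x y ≤ Real.exp (-δ) / (1 - δ) * Real.exp x := by
  unfold bellman
  set s := √(δ ^ 2 - (y - x ^ 2))
  have hfactor : 0 ≤ Real.exp (x - δ) / (1 - δ) :=
    div_nonneg (Real.exp_pos _).le (sub_pos.2 hδ).le
  have hs : (1 - s) * Real.exp s ≤ 1 := by
    calc (1 - s) * Real.exp s ≤ Real.exp (-s) * Real.exp s :=
          mul_le_mul_of_nonneg_right (Real.one_sub_le_exp_neg s) (Real.exp_pos s).le
      _ = 1 := by rw [← Real.exp_add, neg_add_cancel, Real.exp_zero]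
  calc (1 - s) / (1 - δ) * Real.exp (x + s - δ)
      = Real.exp (x - δ) / (1 - δ) * ((1 - s) * Real.exp s) := by
        rw [show x + s - δ = x - δ + s by ring, Real.exp_add]; ring
    _ ≤ Real.exp (x - δ) / (1 - δ) := mul_le_of_le_one_right hfactor hs
    _ = Real.exp (-δ) / (1 - δ) * Real.exp x := by
        rw [show x - δ = -δ + x by ring, Real.exp_add]; ring

lemma bellman_self_sq (hδ0 : 0 ≤ δ) (hδ : δ < 1) (x : ℝ) : bellman δ x (x ^ 2) = Real.exp x := by
  simp [bellman, Real.sqrt_sq hδ0, div_self (sub_pos.2 hδ).ne']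

lemma continuous_bellman (δ : ℝ) : Continuous fun p : ℝ × ℝ => bellman δ p.1 p.2 := by
  unfold bellman
  fun_prop

lemma continuousAt_bellman_param (hδ : δ ≠ 1) (x y : ℝ) :
    ContinuousAt (fun δ => bellman δ x y) δ := by
  unfold bellman
  have hδ' : 1 - δ ≠ 0 := sub_ne_zero.2 hδ.symm
  fun_prop (disch := exact hδ')

end Bellman

section Differentiation

variable {f : ℝ → ℝ} {a b t : ℝ}

/-- The nondegenerate closed subintervals of `[a, b]` containing `t`, encoded by their pairs of
endpoints. The filter `𝓝[subintervalsThrough a b t] (t, t)` expresses that such intervals shrink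
to `t`. -/
def subintervalsThrough (a b t : ℝ) : Set (ℝ × ℝ) :=
  {p | a ≤ p.1 ∧ p.2 ≤ b ∧ p.1 < p.2 ∧ t ∈ Icc p.1 p.2}

lemma subintervalsThrough_mono {a' b' : ℝ} (ha : a' ≤ a) (hb : b ≤ b') :
    subintervalsThrough a b t ⊆ subintervalsThrough a' b' t :=
  fun _ hp => ⟨ha.trans hp.1, hp.2.1.trans hb, hp.2.2⟩

lemma tendsto_nhdsWithin_subintervalsThrough {ι : Type*} {l : Filter ι} {p : ι → ℝ × ℝ}
    (hp : ∀ i, p i ∈ subintervalsThrough a b t)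
    (hlen : Tendsto (fun i => (p i).2 - (p i).1) l (𝓝 0)) :
    Tendsto p l (𝓝[subintervalsThrough a b t] (t, t)) := by
  refine tendsto_nhdsWithin_iff.2 ⟨Tendsto.prodMk_nhds ?_ ?_, Eventually.of_forall hp⟩
  · refine tendsto_of_tendsto_of_tendsto_of_le_of_le (by simpa using hlen.const_sub t)
      tendsto_const_nhds (fun i => ?_) fun i => (hp i).2.2.2.1
    linarith [(hp i).2.2.2.2]
  · refine tendsto_of_tendsto_of_tendsto_of_le_of_le tendsto_const_nhds
      (by simpa using hlen.const_add t) (fun i => (hp i).2.2.2.2) fun i => ?_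
    linarith [(hp i).2.2.2.1]

lemma ae_tendsto_avg_of_locallyIntegrable (hf : LocallyIntegrable f volume) (a b : ℝ) :
    ∀ᵐ t, Tendsto (fun p : ℝ × ℝ => avg f p.1 p.2) (𝓝[subintervalsThrough a b t] (t, t))
      (𝓝 (f t)) := by
  filter_upwards [IsUnifLocDoublingMeasure.ae_tendsto_average volume hf 1] with t ht
  have hradius : Tendsto (fun p : ℝ × ℝ => (p.2 - p.1) / 2)
      (𝓝[subintervalsThrough a b t] (t, t)) (𝓝[>] 0) := by
    refine tendsto_nhdsWithin_iff.2 ⟨?_, ?_⟩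
    · have : Tendsto (fun p : ℝ × ℝ => (p.2 - p.1) / 2) (𝓝 (t, t)) (𝓝 ((t - t) / 2)) :=
        Continuous.tendsto (by fun_prop) (t, t)
      simpa using this.mono_left nhdsWithin_le_nhds
    · filter_upwards [self_mem_nhdsWithin] with p hp
      exact half_pos (sub_pos.2 hp.2.2.1)
  refine (ht (fun p : ℝ × ℝ => (p.1 + p.2) / 2) _ hradius ?_).congr' ?_
  · filter_upwards [self_mem_nhdsWithin] with p hp
    rw [one_mul, ← Real.Icc_eq_closedBall]
    exact hp.2.2.2
  · filter_upwards [self_mem_nhdsWithin] with p hp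
    exact (avg_eq_average_closedBall hp.2.2.1.le).symm

lemma ae_tendsto_avg (hf : IntegrableOn f (Ioc a b)) :
    ∀ᵐ t ∂volume.restrict (Ioc a b), Tendsto (fun p : ℝ × ℝ => avg f p.1 p.2)
      (𝓝[subintervalsThrough a b t] (t, t)) (𝓝 (f t)) := by
  have hind := (hf.integrable_indicator measurableSet_Ioc).locallyIntegrable
  rw [ae_restrict_iff' measurableSet_Ioc]
  filter_upwards [ae_tendsto_avg_of_locallyIntegrable hind a b] with t ht hmem
  rw [indicator_of_mem hmem] at ht
  refine ht.congr' ?_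
  filter_upwards [self_mem_nhdsWithin] with p hp
  exact avg_indicator_Ioc hp.1 hp.2.2.1.le hp.2.1

end Differentiation

section SplitSuperadditive

variable {F : ℝ → ℝ → ℝ≥0∞} {a b c d θ : ℝ}

/-- Every subinterval `[c, d]` of `[a, b]` can be cut into two pieces, each of relative length at
least `θ`, such that the length-weighted sum of `F` over the pieces is at most that of `[c, d]`.
Here `F` is a function of intervals with the normalisation of an average. -/
def SplitSuperadditiveOn (F : ℝ → ℝ → ℝ≥0∞) (θ a b : ℝ) : Prop :=
  ∀ c d, a ≤ c → c < d → d ≤ b → ∃ τ ∈ Icc (c + θ * (d - c)) (d - θ * (d - c)),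
    ENNReal.ofReal (τ - c) * F c τ + ENNReal.ofReal (d - τ) * F τ d ≤ ENNReal.ofReal (d - c) * F c d

lemma lintegral_Ioc_ite {g₁ g₂ : ℝ → ℝ≥0∞} {τ : ℝ} (hcτ : c ≤ τ) (hτd : τ ≤ d) :
    ∫⁻ t in Ioc c d, (if t ≤ τ then g₁ t else g₂ t) =
      (∫⁻ t in Ioc c τ, g₁ t) + ∫⁻ t in Ioc τ d, g₂ t := by
  rw [← Ioc_union_Ioc_eq_Ioc hcτ hτd,
    lintegral_union measurableSet_Ioc (Ioc_disjoint_Ioc_of_le le_rfl)]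
  congr 1
  · exact setLIntegral_congr_fun measurableSet_Ioc fun t ht => if_pos ht.2
  · exact setLIntegral_congr_fun measurableSet_Ioc fun t ht => if_neg (not_le.2 ht.1)

namespace SplitSuperadditiveOn

/- `g` is the step function with the values of `F` on the pieces left after `n` rounds of cuts. -/
lemma exists_stepFunction (hF : SplitSuperadditiveOn F θ a b) (hθ0 : 0 < θ) (hθ1 : θ ≤ 1) (n : ℕ)
    (hac : a ≤ c) (hcd : c < d) (hdb : d ≤ b) :
    ∃ g : ℝ → ℝ≥0∞, Measurable g ∧ ∫⁻ t in Ioc c d, g t ≤ ENNReal.ofReal (d - c) * F c d ∧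
      ∀ t ∈ Ioc c d, ∃ p ∈ subintervalsThrough c d t,
        p.2 - p.1 ≤ (1 - θ) ^ n * (d - c) ∧ g t = F p.1 p.2 := by
  induction n generalizing c d with
  | zero =>
    refine ⟨fun _ => F c d, measurable_const, ?_, fun t ht =>
      ⟨(c, d), ⟨le_rfl, le_rfl, hcd, Ioc_subset_Icc_self ht⟩, by simp, rfl⟩⟩
    rw [setLIntegral_const, Real.volume_Ioc, mul_comm]
  | succ n ih =>
    obtain ⟨τ, ⟨hτ₁, hτ₂⟩, hsplit⟩ := hF c d hac hcd hdb
    have hpiece : 0 < θ * (d - c) := mul_pos hθ0 (sub_pos.2 hcd)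
    have hcτ : c < τ := by linarith
    have hτd : τ < d := by linarith
    obtain ⟨g₁, hg₁, hint₁, hval₁⟩ := ih hac hcτ (hτd.le.trans hdb)
    obtain ⟨g₂, hg₂, hint₂, hval₂⟩ := ih (hac.trans hcτ.le) hτd hdb
    have hshrink {ℓ : ℝ} (hℓ : ℓ ≤ (1 - θ) * (d - c)) :
        (1 - θ) ^ n * ℓ ≤ (1 - θ) ^ (n + 1) * (d - c) := by
      rw [pow_succ, mul_assoc]
      exact mul_le_mul_of_nonneg_left hℓ (pow_nonneg (sub_nonneg.2 hθ1) n)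
    refine ⟨fun t => if t ≤ τ then g₁ t else g₂ t, hg₁.ite measurableSet_Iic hg₂, ?_,
      fun t ht => ?_⟩
    · rw [lintegral_Ioc_ite hcτ.le hτd.le]
      exact (add_le_add hint₁ hint₂).trans hsplit
    rcases le_or_gt t τ with htτ | hτt
    · obtain ⟨p, hp, hlen, hgp⟩ := hval₁ t ⟨ht.1, htτ⟩
      exact ⟨p, subintervalsThrough_mono le_rfl hτd.le hp,
        hlen.trans (hshrink (by linarith)), (if_pos htτ).trans hgp⟩
    · obtain ⟨p, hp, hlen, hgp⟩ := hval₂ t ⟨hτt, ht.2⟩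
      exact ⟨p, subintervalsThrough_mono hcτ.le le_rfl hp,
        hlen.trans (hshrink (by linarith)), (if_neg hτt.not_ge).trans hgp⟩

lemma lintegral_le {f : ℝ → ℝ≥0∞} (hF : SplitSuperadditiveOn F θ a b) (hθ0 : 0 < θ) (hθ1 : θ ≤ 1)
    (hab : a < b) (hlim : ∀ᵐ t ∂volume.restrict (Ioc a b), Tendsto (fun p : ℝ × ℝ => F p.1 p.2)
      (𝓝[subintervalsThrough a b t] (t, t)) (𝓝 (f t))) :
    ∫⁻ t in Ioc a b, f t ≤ ENNReal.ofReal (b - a) * F a b := by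
  choose g hgmeas hgint hgval using fun n =>
    hF.exists_stepFunction hθ0 hθ1 n le_rfl hab le_rfl
  have hliminf : ∀ᵐ t ∂volume.restrict (Ioc a b), f t = liminf (fun n => g n t) atTop := by
    filter_upwards [hlim, ae_restrict_mem measurableSet_Ioc] with t ht hmem
    choose p hp hlen hgp using fun n => hgval n t hmem
    have hbound : Tendsto (fun n => (1 - θ) ^ n * (b - a)) atTop (𝓝 0) := by
      simpa using (tendsto_pow_atTop_nhds_zero_of_lt_one (sub_nonneg.2 hθ1)
        (sub_lt_self 1 hθ0)).mul_const (b - a)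
    have hshrink : Tendsto (fun n => (p n).2 - (p n).1) atTop (𝓝 0) :=
      squeeze_zero (fun n => (sub_pos.2 (hp n).2.2.1).le) hlen hbound
    have hg : Tendsto (fun n => g n t) atTop (𝓝 (f t)) := by
      simpa only [hgp, Function.comp_def] using
        ht.comp (tendsto_nhdsWithin_subintervalsThrough hp hshrink)
    exact hg.liminf_eq.symm
  calc ∫⁻ t in Ioc a b, f t = ∫⁻ t in Ioc a b, liminf (fun n => g n t) atTop :=
        lintegral_congr_ae hliminf
    _ ≤ liminf (fun n => ∫⁻ t in Ioc a b, g n t) atTop := lintegral_liminf_le hgmeas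
    _ ≤ ENNReal.ofReal (b - a) * F a b :=
        liminf_le_of_le (by isBoundedDefault) fun _ h => by
          obtain ⟨n, hn⟩ := h.exists
          exact hn.trans (hgint n)

end SplitSuperadditiveOn

end SplitSuperadditive

section JohnNirenberg

variable {ε δ a b : ℝ} {φ : ℝ → ℝ}

lemma BMOe.bellman_avg_add_le {τ : ℝ} (hφ : BMOe ε a b φ) (haτ : a < τ) (hτb : τ < b)
    (hεδ : ε ^ 2 ≤ δ ^ 2) (hδ : δ < 1) (hleft : avg φ a τ ≤ avg φ a b + √(δ ^ 2 - ε ^ 2))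
    (hright : avg φ τ b ≤ avg φ a b + √(δ ^ 2 - ε ^ 2)) :
    (τ - a) * bellman δ (avg φ a τ) (avg (fun t => φ t ^ 2) a τ) +
        (b - τ) * bellman δ (avg φ τ b) (avg (fun t => φ t ^ 2) τ b) ≤
      (b - a) * bellman δ (avg φ a b) (avg (fun t => φ t ^ 2) a b) := by
  have hV := hφ.avg_sq_sub_sq_avg_le (haτ.trans hτb)
  have hV₁ := (hφ.mono le_rfl haτ hτb.le).avg_sq_sub_sq_avg_le haτ
  have hV₂ := (hφ.mono haτ.le hτb le_rfl).avg_sq_sub_sq_avg_le hτb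
  have hσ : √(δ ^ 2 - ε ^ 2) ≤ √(δ ^ 2 - (avg (fun t => φ t ^ 2) a b - avg φ a b ^ 2)) :=
    Real.sqrt_le_sqrt (by linarith)
  have hlen : τ - a + (b - τ) = b - a := by ring
  have hadd := bellman_add_le hδ (sub_pos.2 haτ).le (sub_pos.2 hτb).le
    (hlen ▸ hφ.sub_mul_avg_add haτ hτb) (hlen ▸ hφ.sub_mul_avg_sq_add haτ hτb)
    (hV.trans hεδ) (hV₁.trans hεδ) (hV₂.trans hεδ) (by linarith) (by linarith)
  rwa [hlen] at hadd

lemma BMOe.splitSuperadditiveOn_bellman (hφ : BMOe ε a b φ) (hε0 : 0 ≤ ε) (hεδ : ε < δ)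
    (hδ : δ < 1) :
    SplitSuperadditiveOn
      (fun c d => ENNReal.ofReal (bellman δ (avg φ c d) (avg (fun t => φ t ^ 2) c d)))
      ((δ ^ 2 - ε ^ 2) / 2) a b := by
  intro c d hac hcd hdb
  have hφ := hφ.mono hac hcd hdb
  have hδ0 : 0 ≤ δ := hε0.trans hεδ.le
  have hε_sq : ε ^ 2 < δ ^ 2 := pow_lt_pow_left₀ hεδ hε0 two_ne_zero
  have hδ_sq : δ ^ 2 ≤ 1 := pow_le_one₀ hδ0 hδ.le
  have hσ_sq : √(δ ^ 2 - ε ^ 2) ^ 2 = δ ^ 2 - ε ^ 2 := Real.sq_sqrt (by linarith)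
  obtain ⟨τ, hτ, hleft, hright⟩ := hφ.exists_split hcd (Real.sqrt_nonneg (δ ^ 2 - ε ^ 2))
    (θ := (δ ^ 2 - ε ^ 2) / 2) (by linarith) (by linarith [sq_nonneg ε])
    (by rw [hσ_sq]; nlinarith [sq_nonneg ε])
  have hpiece : 0 < (δ ^ 2 - ε ^ 2) / 2 * (d - c) := mul_pos (by linarith) (sub_pos.2 hcd)
  have hcτ : 0 < τ - c := by linarith [hτ.1]
  have hτd : 0 < d - τ := by linarith [hτ.2]
  have hadd := hφ.bellman_avg_add_le (sub_pos.1 hcτ) (sub_pos.1 hτd) hε_sq.le hδ hleft hright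
  have hB₁ := bellman_nonneg hδ0 hδ
    ((hφ.mono le_rfl (sub_pos.1 hcτ) (sub_pos.1 hτd).le).sq_avg_le (sub_pos.1 hcτ))
  have hB₂ := bellman_nonneg hδ0 hδ
    ((hφ.mono (sub_pos.1 hcτ).le (sub_pos.1 hτd) le_rfl).sq_avg_le (sub_pos.1 hτd))
  refine ⟨τ, hτ, ?_⟩
  rw [← ENNReal.ofReal_mul hcτ.le, ← ENNReal.ofReal_mul hτd.le,
    ← ENNReal.ofReal_mul (sub_pos.2 hcd).le,
    ← ENNReal.ofReal_add (mul_nonneg hcτ.le hB₁) (mul_nonneg hτd.le hB₂)]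
  exact ENNReal.ofReal_le_ofReal hadd

lemma BMOe.ae_tendsto_bellman (hφ : BMOe ε a b φ) (hab : a ≤ b) (hδ0 : 0 ≤ δ) (hδ : δ < 1) :
    ∀ᵐ t ∂volume.restrict (Ioc a b),
      Tendsto (fun p : ℝ × ℝ => bellman δ (avg φ p.1 p.2) (avg (fun t => φ t ^ 2) p.1 p.2))
        (𝓝[subintervalsThrough a b t] (t, t)) (𝓝 (Real.exp (φ t))) := by
  have hint := (intervalIntegrable_iff_integrableOn_Ioc_of_le hab).1 hφ.1
  have hint_sq := (intervalIntegrable_iff_integrableOn_Ioc_of_le hab).1 hφ.2.1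
  filter_upwards [ae_tendsto_avg hint, ae_tendsto_avg hint_sq] with t htend htend_sq
  have hdiag : Tendsto (fun z : ℝ × ℝ => bellman δ z.1 z.2) (𝓝 (φ t, φ t ^ 2))
      (𝓝 (Real.exp (φ t))) :=
    (continuous_bellman δ).tendsto' _ _ (bellman_self_sq hδ0 hδ (φ t))
  simpa only [Function.comp_def] using hdiag.comp (htend.prodMk_nhds htend_sq)

lemma lintegral_exp_le_bellman_of_lt (hε0 : 0 ≤ ε) (hεδ : ε < δ) (hδ : δ < 1) (hab : a < b)
    (hφ : BMOe ε a b φ) :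
    ∫⁻ t in Ioc a b, ENNReal.ofReal (Real.exp (φ t)) ≤ ENNReal.ofReal (b - a) *
      ENNReal.ofReal (bellman δ (avg φ a b) (avg (fun t => φ t ^ 2) a b)) := by
  have hδ0 : 0 ≤ δ := hε0.trans hεδ.le
  have hε_sq : ε ^ 2 < δ ^ 2 := pow_lt_pow_left₀ hεδ hε0 two_ne_zero
  have hδ_sq : δ ^ 2 ≤ 1 := pow_le_one₀ hδ0 hδ.le
  refine (hφ.splitSuperadditiveOn_bellman hε0 hεδ hδ).lintegral_le (by linarith)
    (by linarith [sq_nonneg ε]) hab ?_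
  filter_upwards [hφ.ae_tendsto_bellman hab.le hδ0 hδ] with t ht
  exact ENNReal.tendsto_ofReal ht

lemma lintegral_exp_le_bellman (hε0 : 0 ≤ ε) (hε1 : ε < 1) (hab : a < b) (hφ : BMOe ε a b φ) :
    ∫⁻ t in Ioc a b, ENNReal.ofReal (Real.exp (φ t)) ≤ ENNReal.ofReal (b - a) *
      ENNReal.ofReal (bellman ε (avg φ a b) (avg (fun t => φ t ^ 2) a b)) := by
  have hlim := (continuousAt_bellman_param hε1.ne (avg φ a b)
    (avg (fun t => φ t ^ 2) a b)).tendsto.mono_left (nhdsWithin_le_nhds (s := Ioi ε))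
  refine ge_of_tendsto (ENNReal.Tendsto.const_mul (ENNReal.tendsto_ofReal hlim)
    (Or.inr ENNReal.ofReal_ne_top)) ?_
  filter_upwards [Ioo_mem_nhdsGT hε1] with δ hδ
  exact lintegral_exp_le_bellman_of_lt hε0 hδ.1 hδ.2 hab hφ

lemma intervalIntegrable_and_avg_le_of_lintegral_le {f : ℝ → ℝ} {C : ℝ} (hab : a < b)
    (hf : AEStronglyMeasurable f (volume.restrict (Ioc a b)))
    (hf0 : 0 ≤ᵐ[volume.restrict (Ioc a b)] f) (hC : 0 ≤ C)
    (h : ∫⁻ t in Ioc a b, ENNReal.ofReal (f t) ≤ ENNReal.ofReal (b - a) * ENNReal.ofReal C) :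
    IntervalIntegrable f volume a b ∧ avg f a b ≤ C := by
  have hlen : 0 < b - a := sub_pos.2 hab
  rw [← ENNReal.ofReal_mul hlen.le] at h
  constructor
  · rw [intervalIntegrable_iff_integrableOn_Ioc_of_le hab.le]
    exact ⟨hf, (hasFiniteIntegral_iff_ofReal hf0).2 (h.trans_lt ENNReal.ofReal_lt_top)⟩
  · rw [avg, div_le_iff₀' hlen, intervalIntegral.integral_of_le hab.le,
      integral_eq_lintegral_of_nonneg_ae hf0 hf]
    exact ENNReal.toReal_le_of_le_ofReal (mul_nonneg hlen.le hC) h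

theorem avg_exp_le_bellman (hε0 : 0 ≤ ε) (hε1 : ε < 1) (hab : a < b) (hφ : BMOe ε a b φ) :
    IntervalIntegrable (fun t => Real.exp (φ t)) volume a b ∧
      avg (fun t => Real.exp (φ t)) a b ≤
        bellman ε (avg φ a b) (avg (fun t => φ t ^ 2) a b) :=
  intervalIntegrable_and_avg_le_of_lintegral_le hab
    (Real.continuous_exp.comp_aestronglyMeasurable hφ.1.1.aestronglyMeasurable)
    (Eventually.of_forall fun t => (Real.exp_pos (φ t)).le)
    (bellman_nonneg hε0 hε1 (hφ.sq_avg_le hab)) (lintegral_exp_le_bellman hε0 hε1 hab hφ)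

end JohnNirenberg

end

/-- Integral-form John–Nirenberg inequality with the sharp constant
`e^{−ε}/(1−ε)` for `0 ≤ ε < 1`. -/
theorem stmt0 (ε : ℝ) (hε0 : 0 ≤ ε) (hε1 : ε < 1) (a b : ℝ) (hab : a < b)
    (φ : ℝ → ℝ) (hφ : BMOe ε a b φ) :
    IntervalIntegrable (fun t => Real.exp (φ t)) volume a b ∧
    avg (fun t => Real.exp (φ t)) a b ≤
      (Real.exp (-ε) / (1 - ε)) * Real.exp (avg φ a b) := by
  obtain ⟨hint, hle⟩ := avg_exp_le_bellman hε0 hε1 hab hφ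
  exact ⟨hint, hle.trans (bellman_le_mul_exp hε1)⟩
end

section
/- Let 0 < ε < 1 and let I be a nondegenerate bounded interval. Then for every φ ∈ BMO_ε(I), the function e^φ is integrable on I and ⟨e^φ⟩_I ≤ B⁺_ε(⟨φ⟩_I, ⟨φ²⟩_I). -/
open MeasureTheory Real

/-- The parabolic strip `Ω_ε = {x : x₁² ≤ x₂ ≤ x₁² + ε²}`. -/
def Omega (ε : ℝ) : Set (ℝ × ℝ) := {x | x.1 ^ 2 ≤ x.2 ∧ x.2 ≤ x.1 ^ 2 + ε ^ 2}

/-- The upper Bellman function `B⁺_δ`. -/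
noncomputable def Bp (δ : ℝ) (x : ℝ × ℝ) : ℝ :=
  (1 - Real.sqrt (δ ^ 2 + x.1 ^ 2 - x.2)) / (1 - δ) *
    Real.exp (x.1 + Real.sqrt (δ ^ 2 + x.1 ^ 2 - x.2) - δ)

/-- The lower Bellman function `B⁻_δ`. -/
noncomputable def Bm (δ : ℝ) (x : ℝ × ℝ) : ℝ :=
  (1 + Real.sqrt (δ ^ 2 + x.1 ^ 2 - x.2)) / (1 + δ) *
    Real.exp (x.1 - Real.sqrt (δ ^ 2 + x.1 ^ 2 - x.2) + δ)

/-!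
The function `B⁺_δ` is locally concave on `Ω_δ`: at a point on a tangent to the upper boundary it
equals an affine function, and that function dominates it at every point whose first coordinate is
at most that of the tangency point. The obstacle to a Bellman induction is to split `I` without
leaving `Ω_δ`. The rising sun lemma, applied to the primitive of `φ - l`, yields for each
`l ≥ ⟨φ⟩_I` an open set `U_l` on whose components `φ` has mean exactly `l`, hence second moment at
most `l² + ε²`, while `φ ≤ l` almost everywhere outside `U_l`. Passing from `U_l` to `U_{l + η}`
with `η = √(δ² - ε²)`, all the points involved stay where a single affine function majorizes, so
`∫ e^φ` over the complement of `U_l` plus `|U_l| B⁺_δ(l, ⟨φ²⟩_{U_l})` does not increase.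
Letting `l → ∞` gives the bound with `B⁺_δ` for every `δ > ε`, and then `δ → ε`.
-/

open Set Filter Topology

section ExpInequality

lemma exp_le_one_add_add_sq_div_two {y : ℝ} (hy : y ≤ 0) : exp y ≤ 1 + y + y ^ 2 / 2 := by
  have hneg : 1 - y + y ^ 2 / 2 ≤ exp (-y) := by
    simpa [sub_eq_add_neg] using quadratic_le_exp_of_nonneg (neg_nonneg.2 hy)
  have hprod : 1 ≤ (1 + y + y ^ 2 / 2) * (1 - y + y ^ 2 / 2) := by nlinarith [sq_nonneg (y ^ 2)]
  have hpos : 0 ≤ 1 + y + y ^ 2 / 2 := by nlinarith [sq_nonneg (1 + y)]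
  calc exp y ≤ exp y * ((1 + y + y ^ 2 / 2) * (1 - y + y ^ 2 / 2)) :=
        le_mul_of_one_le_right (exp_pos y).le hprod
    _ ≤ exp y * ((1 + y + y ^ 2 / 2) * exp (-y)) := by gcongr
    _ = 1 + y + y ^ 2 / 2 := by rw [mul_left_comm, ← exp_add, add_neg_cancel, exp_zero, mul_one]

lemma one_sub_mul_exp_le {y : ℝ} (hy : 0 ≤ y) : (1 - y) * exp y ≤ 1 - y ^ 2 / 2 := by
  have hderiv (x : ℝ) :
      HasDerivAt (fun x ↦ (1 - x) * exp x + x ^ 2 / 2) (x * (1 - exp x)) x := by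
    convert! (((hasDerivAt_id x).const_sub 1).mul (hasDerivAt_exp x)).add
      (((hasDerivAt_id x).pow 2).div_const 2) using 1
    simp
    ring
  have hanti : Antitone fun x : ℝ ↦ (1 - x) * exp x + x ^ 2 / 2 :=
    antitone_of_hasDerivAt_nonpos hderiv fun x ↦ by
      rcases le_total 0 x with hx | hx
      · exact mul_nonpos_of_nonneg_of_nonpos hx (sub_nonpos.2 (one_le_exp hx))
      · exact mul_nonpos_of_nonpos_of_nonneg hx (sub_nonneg.2 (exp_le_one_iff.2 hx))
  have h := hanti hy
  simp only [sub_zero, exp_zero, mul_one, ne_eq, OfNat.ofNat_ne_zero, not_false_eq_true, zero_pow,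
    zero_div, add_zero] at h
  linarith

lemma one_sub_mul_exp_le_add_sq {s y : ℝ} (hs0 : 0 ≤ s) (hs1 : s ≤ 1) (hy : y ≤ s) :
    (1 - s) * exp y ≤ (1 - s) * (1 + y) + y ^ 2 / 2 := by
  suffices h : (1 - s) * (exp y - (1 + y)) ≤ y ^ 2 / 2 by linarith
  rcases le_total y 0 with hy0 | hy0
  · calc (1 - s) * (exp y - (1 + y)) ≤ (1 - s) * (y ^ 2 / 2) := by
          gcongr
          linarith [exp_le_one_add_add_sq_div_two hy0]
      _ ≤ y ^ 2 / 2 := mul_le_of_le_one_left (by positivity) (by linarith)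
  · calc (1 - s) * (exp y - (1 + y)) ≤ (1 - y) * (exp y - (1 + y)) := by
          gcongr
          linarith [add_one_le_exp y]
      _ ≤ y ^ 2 / 2 := by linarith [one_sub_mul_exp_le hy0]

end ExpInequality

section BellmanFunction

variable {ε δ v : ℝ} {x : ℝ × ℝ}

lemma Omega_subset_Omega (hε : 0 ≤ ε) (hεδ : ε ≤ δ) : Omega ε ⊆ Omega δ :=
  fun _ hx ↦ ⟨hx.1, hx.2.trans (by gcongr)⟩

/-- The affine function on the plane that agrees with `B⁺_δ` on the tangent to the upper boundary
of `Ω_δ` drawn from `(v, v²)` to `(v + δ, (v + δ)² + δ²)`. -/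
noncomputable def tangentMajorant (δ v : ℝ) (x : ℝ × ℝ) : ℝ :=
  exp v * (1 + (x.1 - v) + (x.2 - 2 * v * x.1 + v ^ 2) / (2 * (1 - δ)))

lemma Bp_eq_tangentMajorant (hδ1 : δ ≠ 1) (hx : x ∈ Omega δ) :
    Bp δ x = tangentMajorant δ (x.1 + √(δ ^ 2 + x.1 ^ 2 - x.2) - δ) x := by
  have hs : √(δ ^ 2 + x.1 ^ 2 - x.2) ^ 2 = δ ^ 2 + x.1 ^ 2 - x.2 := sq_sqrt (by linarith [hx.2])
  unfold Bp tangentMajorant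
  set s := √(δ ^ 2 + x.1 ^ 2 - x.2)
  have hx2 : x.2 = δ ^ 2 + x.1 ^ 2 - s ^ 2 := by linarith
  have hδ : 1 - δ ≠ 0 := sub_ne_zero.2 hδ1.symm
  rw [mul_comm, hx2]
  congr 1
  field_simp
  ring

lemma sqrt_le_of_mem_Omega (hδ0 : 0 ≤ δ) (hx : x ∈ Omega δ) : √(δ ^ 2 + x.1 ^ 2 - x.2) ≤ δ :=
  (sqrt_le_left hδ0).2 (by linarith [hx.1])

lemma Bp_nonneg (hδ0 : 0 ≤ δ) (hδ1 : δ < 1) (hx : x ∈ Omega δ) : 0 ≤ Bp δ x := by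
  have hs := sqrt_le_of_mem_Omega hδ0 hx
  exact mul_nonneg (div_nonneg (by linarith) (by linarith)) (exp_pos _).le

lemma Bp_le_tangentMajorant (hδ0 : 0 ≤ δ) (hδ1 : δ < 1) (hx : x ∈ Omega δ) (hv : x.1 - v ≤ δ) :
    Bp δ x ≤ tangentMajorant δ v x := by
  have hsδ := sqrt_le_of_mem_Omega hδ0 hx
  have hs : √(δ ^ 2 + x.1 ^ 2 - x.2) ^ 2 = δ ^ 2 + x.1 ^ 2 - x.2 := sq_sqrt (by linarith [hx.2])
  unfold Bp tangentMajorant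
  have hs0 : 0 ≤ √(δ ^ 2 + x.1 ^ 2 - x.2) := sqrt_nonneg _
  set s := √(δ ^ 2 + x.1 ^ 2 - x.2)
  set y := x.1 + s - δ - v with hy
  have hδ : 0 < 1 - δ := by linarith
  calc (1 - s) / (1 - δ) * exp (x.1 + s - δ)
      = exp v * ((1 - s) * exp y / (1 - δ)) := by
        rw [show x.1 + s - δ = v + y by ring, exp_add]; ring
    _ ≤ exp v * (((1 - s) * (1 + y) + y ^ 2 / 2) / (1 - δ)) := by
        gcongr
        exact one_sub_mul_exp_le_add_sq hs0 (by linarith) (by linarith)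
    _ = exp v * (1 + (x.1 - v) + (x.2 - 2 * v * x.1 + v ^ 2) / (2 * (1 - δ))) := by
        rw [hy, show x.2 = δ ^ 2 + x.1 ^ 2 - s ^ 2 by linarith]
        field_simp
        ring

lemma Bp_self_sq (hδ0 : 0 ≤ δ) (hδ1 : δ ≠ 1) (t : ℝ) : Bp δ (t, t ^ 2) = exp t := by
  have hδ : 1 - δ ≠ 0 := sub_ne_zero.2 hδ1.symm
  simp [Bp, sqrt_sq hδ0, div_self hδ]

lemma exp_le_tangentMajorant {t : ℝ} (hδ0 : 0 ≤ δ) (hδ1 : δ < 1) (ht : t - v ≤ δ) :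
    exp t ≤ tangentMajorant δ v (t, t ^ 2) := by
  rw [← Bp_self_sq hδ0 hδ1.ne t]
  exact Bp_le_tangentMajorant hδ0 hδ1 ⟨le_rfl, by nlinarith⟩ ht

lemma continuousAt_Bp (hε1 : ε ≠ 1) (x : ℝ × ℝ) : ContinuousAt (fun δ ↦ Bp δ x) ε := by
  have hε : 1 - ε ≠ 0 := sub_ne_zero.2 hε1.symm
  unfold Bp
  fun_prop (disch := assumption)

end BellmanFunction

section MeanVariance

variable {X : Type*} [MeasurableSpace X] {μ : Measure X} {φ : X → ℝ} {l l' ε δ v : ℝ}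
  {P Q : Set X}

/-- `φ` has mean `l` and variance at most `ε²` on the set `P` of finite measure. The mean is a
parameter and both conditions are multiplied by `μ P`, so that every real `l` is a mean on a null
set. -/
structure HasMeanVarianceLE (μ : Measure X) (φ : X → ℝ) (l ε : ℝ) (P : Set X) : Prop where
  measurableSet : MeasurableSet P
  measure_ne_top : μ P ≠ ⊤
  memLp : MemLp φ 2 (μ.restrict P)
  setIntegral_eq : ∫ x in P, φ x ∂μ = l * μ.real P
  setIntegral_sq_le : ∫ x in P, φ x ^ 2 ∂μ ≤ (l ^ 2 + ε ^ 2) * μ.real P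

lemma HasMeanVarianceLE.integrableOn (hP : HasMeanVarianceLE μ φ l ε P) : IntegrableOn φ P μ :=
  have := isFiniteMeasure_restrict.2 hP.measure_ne_top
  hP.memLp.integrable one_le_two

lemma HasMeanVarianceLE.setIntegral_quadratic (hP : HasMeanVarianceLE μ φ l ε P) (A B C : ℝ) :
    ∫ x in P, (A * φ x ^ 2 + B * φ x + C) ∂μ =
      A * ∫ x in P, φ x ^ 2 ∂μ + (B * l + C) * μ.real P := by
  have hsq : IntegrableOn (fun x ↦ A * φ x ^ 2) P μ := hP.memLp.integrable_sq.const_mul A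
  have hlin : IntegrableOn (fun x ↦ B * φ x) P μ := hP.integrableOn.const_mul B
  have hconst : IntegrableOn (fun _ ↦ C) P μ := integrableOn_const hP.measure_ne_top
  have hquad : IntegrableOn (fun x ↦ A * φ x ^ 2 + B * φ x) P μ := hsq.add hlin
  rw [integral_add hquad hconst, integral_add hsq hlin, integral_const_mul,
    integral_const_mul, hP.setIntegral_eq, setIntegral_const, smul_eq_mul]
  ring

lemma HasMeanVarianceLE.mk_setAverage_sq_mem_Omega (hP : HasMeanVarianceLE μ φ l ε P)
    (hpos : 0 < μ.real P) : (l, ⨍ x in P, φ x ^ 2 ∂μ) ∈ Omega ε := by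
  have hvar : ∫ x in P, (φ x - l) ^ 2 ∂μ = ∫ x in P, φ x ^ 2 ∂μ - l ^ 2 * μ.real P := by
    calc ∫ x in P, (φ x - l) ^ 2 ∂μ = ∫ x in P, (1 * φ x ^ 2 + (-2 * l) * φ x + l ^ 2) ∂μ := by
          congr 1 with x
          ring
      _ = ∫ x in P, φ x ^ 2 ∂μ - l ^ 2 * μ.real P := by rw [hP.setIntegral_quadratic]; ring
  have hvar_nonneg : 0 ≤ ∫ x in P, (φ x - l) ^ 2 ∂μ := integral_nonneg fun x ↦ sq_nonneg _
  rw [setAverage_eq, smul_eq_mul, inv_mul_eq_div]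
  exact ⟨(le_div_iff₀ hpos).2 (by linarith), (div_le_iff₀ hpos).2 hP.setIntegral_sq_le⟩

lemma tangentMajorant_mk_sq (δ v t : ℝ) :
    tangentMajorant δ v (t, t ^ 2) = exp v / (2 * (1 - δ)) * t ^ 2 +
      exp v * (1 - 2 * v / (2 * (1 - δ))) * t + exp v * (1 - v + v ^ 2 / (2 * (1 - δ))) := by
  simp only [tangentMajorant]
  ring

lemma integrable_tangentMajorant [IsFiniteMeasure μ] (hφ : MemLp φ 2 μ) (δ v : ℝ) :
    Integrable (fun x ↦ tangentMajorant δ v (φ x, φ x ^ 2)) μ := by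
  simp only [tangentMajorant_mk_sq]
  exact ((hφ.integrable_sq.const_mul _).add ((hφ.integrable one_le_two).const_mul _)).add
    (integrable_const _)

lemma HasMeanVarianceLE.integrableOn_tangentMajorant (hP : HasMeanVarianceLE μ φ l ε P)
    (δ v : ℝ) : IntegrableOn (fun x ↦ tangentMajorant δ v (φ x, φ x ^ 2)) P μ :=
  have := isFiniteMeasure_restrict.2 hP.measure_ne_top
  integrable_tangentMajorant hP.memLp δ v

lemma HasMeanVarianceLE.setIntegral_tangentMajorant (hP : HasMeanVarianceLE μ φ l ε P)
    (δ v : ℝ) :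
    ∫ x in P, tangentMajorant δ v (φ x, φ x ^ 2) ∂μ =
      μ.real P * tangentMajorant δ v (l, ⨍ x in P, φ x ^ 2 ∂μ) := by
  have havg : ∫ x in P, φ x ^ 2 ∂μ = μ.real P * ⨍ x in P, φ x ^ 2 ∂μ :=
    (measure_smul_setAverage _ hP.measure_ne_top).symm
  simp only [tangentMajorant_mk_sq]
  rw [hP.setIntegral_quadratic, havg, tangentMajorant]
  ring

/-- The Bellman bound for `∫_P e^φ` when `φ` has mean `l` on `P`, namely `μ(P) B⁺_δ(l, ⟨φ²⟩_P)`. -/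
noncomputable def bellmanMass (μ : Measure X) (φ : X → ℝ) (δ l : ℝ) (P : Set X) : ℝ :=
  μ.real P * Bp δ (l, ⨍ x in P, φ x ^ 2 ∂μ)

lemma HasMeanVarianceLE.bellmanMass_nonneg (hP : HasMeanVarianceLE μ φ l δ P) (hδ0 : 0 ≤ δ)
    (hδ1 : δ < 1) : 0 ≤ bellmanMass μ φ δ l P := by
  rcases (measureReal_nonneg (μ := μ) (s := P)).eq_or_lt with hP0 | hpos
  · simp [bellmanMass, ← hP0]
  · exact mul_nonneg hpos.le (Bp_nonneg hδ0 hδ1 (hP.mk_setAverage_sq_mem_Omega hpos))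

lemma HasMeanVarianceLE.bellmanMass_le_setIntegral (hP : HasMeanVarianceLE μ φ l δ P)
    (hδ0 : 0 ≤ δ) (hδ1 : δ < 1) (hv : l - v ≤ δ) :
    bellmanMass μ φ δ l P ≤ ∫ x in P, tangentMajorant δ v (φ x, φ x ^ 2) ∂μ := by
  rw [hP.setIntegral_tangentMajorant, bellmanMass]
  rcases (measureReal_nonneg (μ := μ) (s := P)).eq_or_lt with hP0 | hpos
  · simp [← hP0]
  · gcongr
    exact Bp_le_tangentMajorant hδ0 hδ1 (hP.mk_setAverage_sq_mem_Omega hpos) hv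

lemma HasMeanVarianceLE.mono (hP : HasMeanVarianceLE μ φ l ε P) (hε : 0 ≤ ε) (hεδ : ε ≤ δ) :
    HasMeanVarianceLE μ φ l δ P where
  __ := hP
  setIntegral_sq_le := hP.setIntegral_sq_le.trans (by gcongr)

/-- The variance gap between `ε` and `δ` leaves room to raise `l` by `√(δ² - ε²)`. -/
lemma HasMeanVarianceLE.exists_bellmanMass_eq_setIntegral (hP : HasMeanVarianceLE μ φ l ε P)
    (hε : 0 ≤ ε) (hεδ : ε ≤ δ) (hδ1 : δ < 1) :
    ∃ v, l + √(δ ^ 2 - ε ^ 2) - v ≤ δ ∧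
      bellmanMass μ φ δ l P = ∫ x in P, tangentMajorant δ v (φ x, φ x ^ 2) ∂μ := by
  simp only [hP.setIntegral_tangentMajorant, bellmanMass]
  rcases (measureReal_nonneg (μ := μ) (s := P)).eq_or_lt with hP0 | hpos
  · exact ⟨l + √(δ ^ 2 - ε ^ 2) - δ, by simp, by simp [← hP0]⟩
  · have hx := hP.mk_setAverage_sq_mem_Omega hpos
    refine ⟨_, ?_, by rw [Bp_eq_tangentMajorant hδ1.ne (Omega_subset_Omega hε hεδ hx)]⟩
    have hgap : √(δ ^ 2 - ε ^ 2) ≤ √(δ ^ 2 + l ^ 2 - ⨍ x in P, φ x ^ 2 ∂μ) :=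
      sqrt_le_sqrt (by linarith [hx.2])
    linarith

lemma integrableOn_exp_of_ae_le (hφ : AEStronglyMeasurable φ (μ.restrict P)) (hP : μ P ≠ ⊤)
    (hle : ∀ᵐ x ∂μ.restrict P, φ x ≤ l) : IntegrableOn (fun x ↦ exp (φ x)) P μ := by
  refine Integrable.mono' (integrableOn_const (C := exp l) hP)
    (continuous_exp.comp_aestronglyMeasurable hφ) ?_
  filter_upwards [hle] with x hx
  simpa using hx

lemma HasMeanVarianceLE.setIntegral_exp_diff_add_bellmanMass_le
    (hP : HasMeanVarianceLE μ φ l ε P) (hQ : HasMeanVarianceLE μ φ l' ε Q) (hQP : Q ⊆ P)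
    (hε : 0 ≤ ε) (hεδ : ε ≤ δ) (hδ1 : δ < 1) (hl : l' ≤ l + √(δ ^ 2 - ε ^ 2))
    (hle : ∀ᵐ x ∂μ.restrict (P \ Q), φ x ≤ l') :
    IntegrableOn (fun x ↦ exp (φ x)) (P \ Q) μ ∧
      ∫ x in P \ Q, exp (φ x) ∂μ + bellmanMass μ φ δ l' Q ≤ bellmanMass μ φ δ l P := by
  have hδ0 : 0 ≤ δ := hε.trans hεδ
  have hsub : P \ Q ⊆ P := sdiff_subset
  have hint : IntegrableOn (fun x ↦ exp (φ x)) (P \ Q) μ :=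
    integrableOn_exp_of_ae_le (hP.memLp.1.mono_set hsub)
      (measure_ne_top_of_subset hsub hP.measure_ne_top) hle
  obtain ⟨v, hv, hPv⟩ := hP.exists_bellmanMass_eq_setIntegral hε hεδ hδ1
  set T := fun x ↦ tangentMajorant δ v (φ x, φ x ^ 2)
  have hT : IntegrableOn T P μ := hP.integrableOn_tangentMajorant δ v
  have hexp : ∫ x in P \ Q, exp (φ x) ∂μ ≤ ∫ x in P \ Q, T x ∂μ := by
    refine integral_mono_ae hint (hT.mono_set hsub) ?_
    filter_upwards [hle] with x hx
    exact exp_le_tangentMajorant hδ0 hδ1 (by linarith)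
  refine ⟨hint, ?_⟩
  calc ∫ x in P \ Q, exp (φ x) ∂μ + bellmanMass μ φ δ l' Q
      ≤ ∫ x in P \ Q, T x ∂μ + ∫ x in Q, T x ∂μ :=
        add_le_add hexp ((hQ.mono hε hεδ).bellmanMass_le_setIntegral hδ0 hδ1 (by linarith))
    _ = ∫ x in P, T x ∂μ := by
        rw [← setIntegral_union disjoint_sdiff_left hQ.measurableSet (hT.mono_set hsub)
          (hT.mono_set hQP), sdiff_union_of_subset hQP]
    _ = bellmanMass μ φ δ l P := hPv.symm

end MeanVariance

section BellmanInduction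

variable {X : Type*} [MeasurableSpace X] {μ : Measure X}

lemma integrableOn_and_setIntegral_le_of_forall_diff {f : X → ℝ} {P : Set X} {V : ℕ → Set X}
    {C : ℝ} (hf : 0 ≤ f) (hP : MeasurableSet P) (hV : ∀ n, MeasurableSet (V n))
    (hanti : Antitone V) (hnull : μ (⋂ n, V n) = 0)
    (hint : ∀ n, IntegrableOn f (P \ V n) μ) (hle : ∀ n, ∫ x in P \ V n, f x ∂μ ≤ C) :
    IntegrableOn f P μ ∧ ∫ x in P, f x ∂μ ≤ C := by
  have hcover : AECover (μ.restrict P) atTop fun n ↦ P \ V n := by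
    refine ⟨(ae_restrict_iff' hP).2 ?_, fun n ↦ hP.diff (hV n)⟩
    filter_upwards [measure_eq_zero_iff_ae_notMem.1 hnull] with x hx hxP
    obtain ⟨N, hN⟩ := not_forall.1 (mem_iInter.not.1 hx)
    filter_upwards [eventually_ge_atTop N] with n hn
    exact ⟨hxP, fun h ↦ hN (hanti hn h)⟩
  have hrestrict n : (μ.restrict P).restrict (P \ V n) = μ.restrict (P \ V n) :=
    Measure.restrict_restrict_of_subset sdiff_subset
  have hfP : IntegrableOn f P μ :=
    hcover.integrable_of_integral_bounded_of_nonneg_ae C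
      (fun n ↦ by rw [IntegrableOn, hrestrict]; exact hint n) (.of_forall hf)
      (.of_forall fun n ↦ by rw [hrestrict]; exact hle n)
  exact ⟨hfP, le_of_tendsto' (hcover.integral_tendsto_of_countably_generated hfP)
    fun n ↦ by rw [hrestrict]; exact hle n⟩

/-- Decreasing sets `U l`, `l ≥ m`, playing the role of the superlevel sets `{φ > l}` in `U m`:
outside `U l` the function `φ` is at most `l`, while on `U l` its mean is exactly `l` and its
variance is still at most `ε²`. -/
structure IsMeanLevelFamily (μ : Measure X) (φ : X → ℝ) (ε m : ℝ) (U : ℝ → Set X) : Prop where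
  hasMeanVarianceLE : ∀ l, m ≤ l → HasMeanVarianceLE μ φ l ε (U l)
  antitoneOn : AntitoneOn U (Ici m)
  ae_le : ∀ l, m ≤ l → ∀ᵐ x ∂μ.restrict (U m \ U l), φ x ≤ l

variable {φ : X → ℝ} {ε δ m : ℝ} {U : ℝ → Set X}

namespace IsMeanLevelFamily

lemma measureReal_mul_le (hU : IsMeanLevelFamily μ φ ε m U) {l : ℝ} (hl : m ≤ l) :
    l * μ.real (U l) ≤ ∫ x in U m, |φ x| ∂μ := by
  have hφ : IntegrableOn φ (U m) μ := (hU.hasMeanVarianceLE m le_rfl).integrableOn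
  have hsub : U l ⊆ U m := hU.antitoneOn self_mem_Ici hl hl
  calc l * μ.real (U l) = ∫ x in U l, φ x ∂μ := (hU.hasMeanVarianceLE l hl).setIntegral_eq.symm
    _ ≤ ∫ x in U l, |φ x| ∂μ :=
        integral_mono (hφ.mono_set hsub) (hφ.mono_set hsub).abs fun x ↦ le_abs_self _
    _ ≤ ∫ x in U m, |φ x| ∂μ :=
        setIntegral_mono_set hφ.abs (.of_forall fun x ↦ abs_nonneg _) hsub.eventuallyLE

lemma measure_iInter_eq_zero (hU : IsMeanLevelFamily μ φ ε m U) {l : ℕ → ℝ} (hm : ∀ n, m ≤ l n)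
    (hl : Tendsto l atTop atTop) : μ (⋂ n, U (l n)) = 0 := by
  have hfin n : μ (U (l n)) ≠ ⊤ := (hU.hasMeanVarianceLE _ (hm n)).measure_ne_top
  have hsub n : ⋂ k, U (l k) ⊆ U (l n) := iInter_subset _ n
  rw [← measureReal_eq_zero_iff (measure_ne_top_of_subset (hsub 0) (hfin 0))]
  have hlim : Tendsto (fun n ↦ (∫ x in U m, |φ x| ∂μ) / l n) atTop (𝓝 0) := hl.const_div_atTop _
  refine le_antisymm (ge_of_tendsto hlim ?_) measureReal_nonneg
  filter_upwards [hl.eventually_gt_atTop 0] with n hn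
  calc μ.real (⋂ k, U (l k)) ≤ μ.real (U (l n)) := measureReal_mono (hsub n) (hfin n)
    _ ≤ (∫ x in U m, |φ x| ∂μ) / l n := by
        rw [le_div_iff₀' hn]
        exact hU.measureReal_mul_le (hm n)

lemma setIntegral_exp_diff_nsmul_add_bellmanMass_le (hU : IsMeanLevelFamily μ φ ε m U)
    (hε : 0 ≤ ε) (hεδ : ε ≤ δ) (hδ1 : δ < 1) (n : ℕ) :
    IntegrableOn (fun x ↦ exp (φ x)) (U m \ U (m + n * √(δ ^ 2 - ε ^ 2))) μ ∧
      ∫ x in U m \ U (m + n * √(δ ^ 2 - ε ^ 2)), exp (φ x) ∂μ +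
        bellmanMass μ φ δ (m + n * √(δ ^ 2 - ε ^ 2)) (U (m + n * √(δ ^ 2 - ε ^ 2))) ≤
      bellmanMass μ φ δ m (U m) := by
  induction n with
  | zero => simp
  | succ n ih =>
    have hη : 0 ≤ √(δ ^ 2 - ε ^ 2) := sqrt_nonneg _
    set η := √(δ ^ 2 - ε ^ 2) with hη_def
    set l := m + n * η
    have hl : m ≤ l := le_add_of_nonneg_right (by positivity)
    have hsucc : m + (n + 1 : ℕ) * η = l + η := by push_cast; ring
    have hl' : m ≤ l + η := by linarith
    rw [hsucc]
    have hP := hU.hasMeanVarianceLE l hl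
    have hQ := hU.hasMeanVarianceLE (l + η) hl'
    have hPm : U l ⊆ U m := hU.antitoneOn self_mem_Ici hl hl
    have hQP : U (l + η) ⊆ U l := hU.antitoneOn hl hl' (by linarith)
    obtain ⟨hint, hstep⟩ := hP.setIntegral_exp_diff_add_bellmanMass_le hQ hQP hε hεδ hδ1
      (by rw [hη_def]) (ae_restrict_of_ae_restrict_of_subset (sdiff_subset_sdiff_left hPm)
        (hU.ae_le _ hl'))
    rw [← sdiff_union_sdiff_cancel hPm hQP]
    refine ⟨ih.1.union hint, ?_⟩
    rw [setIntegral_union (disjoint_sdiff_left.mono_right sdiff_subset)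
      (hP.measurableSet.diff hQ.measurableSet) ih.1 hint]
    linarith [ih.2]

theorem integrableOn_exp_and_setIntegral_le_bellmanMass (hU : IsMeanLevelFamily μ φ ε m U)
    (hε : 0 ≤ ε) (hεδ : ε < δ) (hδ1 : δ < 1) :
    IntegrableOn (fun x ↦ exp (φ x)) (U m) μ ∧
      ∫ x in U m, exp (φ x) ∂μ ≤ bellmanMass μ φ δ m (U m) := by
  have hη : 0 < √(δ ^ 2 - ε ^ 2) := sqrt_pos.2 (sub_pos.2 (by gcongr))
  have hchain := hU.setIntegral_exp_diff_nsmul_add_bellmanMass_le hε hεδ.le hδ1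
  set l : ℕ → ℝ := fun n ↦ m + n * √(δ ^ 2 - ε ^ 2)
  have hm n : m ≤ l n := le_add_of_nonneg_right (by positivity)
  have hl : Tendsto l atTop atTop :=
    tendsto_atTop_add_const_left _ _ (tendsto_natCast_atTop_atTop.atTop_mul_const hη)
  have hmono : Monotone l := fun i j hij ↦ by simp only [l]; gcongr
  have hset n := hU.hasMeanVarianceLE (l n) (hm n)
  refine integrableOn_and_setIntegral_le_of_forall_diff (V := fun n ↦ U (l n))
    (fun x ↦ (exp_pos _).le) (hU.hasMeanVarianceLE m le_rfl).measurableSet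
    (fun n ↦ (hset n).measurableSet) (fun i j hij ↦ hU.antitoneOn (hm i) (hm j) (hmono hij))
    (hU.measure_iInter_eq_zero hm hl) (fun n ↦ (hchain n).1) fun n ↦ ?_
  have hmass := ((hset n).mono hε hεδ.le).bellmanMass_nonneg (hε.trans hεδ.le) hδ1
  linarith [(hchain n).2]

end IsMeanLevelFamily

end BellmanInduction

section MaximalInterval

variable {X : Type*} [LinearOrder X] {U : Set X} {a b α β α' β' x : X}

/-- `Ioo α β` is a maximal open interval of `U`: a connected component of `U`, when `U` is a
bounded open set. -/
structure IsMaximalIoo (U : Set X) (α β : X) : Prop where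
  lt : α < β
  Ioo_subset : Ioo α β ⊆ U
  left_notMem : α ∉ U
  right_notMem : β ∉ U

namespace IsMaximalIoo

lemma le_of_mem_Ioo (h : IsMaximalIoo U α β) (h' : IsMaximalIoo U α' β')
    (hx : x ∈ Ioo α β) (hx' : x ∈ Ioo α' β') : α ≤ α' ∧ β' ≤ β :=
  ⟨not_lt.1 fun hα ↦ h.left_notMem (h'.Ioo_subset ⟨hα, hx.1.trans hx'.2⟩),
    not_lt.1 fun hβ ↦ h.right_notMem (h'.Ioo_subset ⟨hx'.1.trans hx.2, hβ⟩)⟩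

lemma le_and_le [DenselyOrdered X] (h : IsMaximalIoo U α β) (hU : U ⊆ Ioo a b) : a ≤ α ∧ β ≤ b :=
  (Ioo_subset_Ioo_iff h.lt).1 (h.Ioo_subset.trans hU)

end IsMaximalIoo

lemma pairwiseDisjoint_Ioo_isMaximalIoo (U : Set X) :
    {p : X × X | IsMaximalIoo U p.1 p.2}.PairwiseDisjoint fun p ↦ Ioo p.1 p.2 := by
  refine pairwiseDisjoint_iff.2 ?_
  rintro ⟨α, β⟩ h ⟨α', β'⟩ h' ⟨x, hx, hx'⟩
  have hle := IsMaximalIoo.le_of_mem_Ioo h h' hx hx'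
  have hge := IsMaximalIoo.le_of_mem_Ioo h' h hx' hx
  exact Prod.ext (hle.1.antisymm hge.1) (hge.2.antisymm hle.2)

end MaximalInterval

section MaximalIntervalIntegral

variable {X : Type*} [ConditionallyCompleteLinearOrder X] [TopologicalSpace X] [OrderTopology X]
  {U : Set X} {a b x : X}

lemma exists_isMaximalIoo_mem (hU : IsOpen U) (hUab : U ⊆ Ioo a b) (hx : x ∈ U) :
    ∃ α β, IsMaximalIoo U α β ∧ x ∈ Ioo α β := by
  have hab := hUab hx
  obtain ⟨α, ⟨hα, hαU⟩, hα_max⟩ := (isCompact_Icc.inter_right hU.isClosed_compl).exists_isGreatest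
    (⟨a, left_mem_Icc.2 hab.1.le, fun ha ↦ (hUab ha).1.false⟩ : (Icc a x ∩ Uᶜ).Nonempty)
  obtain ⟨β, ⟨hβ, hβU⟩, hβ_min⟩ := (isCompact_Icc.inter_right hU.isClosed_compl).exists_isLeast
    (⟨b, right_mem_Icc.2 hab.2.le, fun hb ↦ (hUab hb).2.false⟩ : (Icc x b ∩ Uᶜ).Nonempty)
  have hαx : α < x := hα.2.lt_of_ne fun h ↦ hαU (h ▸ hx)
  have hxβ : x < β := hβ.1.lt_of_ne fun h ↦ hβU (h ▸ hx)
  refine ⟨α, β, ⟨hαx.trans hxβ, fun y hy ↦ by_contra fun hyU ↦ ?_, hαU, hβU⟩, hαx, hxβ⟩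
  rcases le_total y x with hyx | hxy
  · exact (hα_max ⟨⟨hα.1.trans hy.1.le, hyx⟩, hyU⟩).not_gt hy.1
  · exact (hβ_min ⟨⟨hxy, hy.2.le.trans hβ.2⟩, hyU⟩).not_gt hy.2

lemma iUnion_Ioo_isMaximalIoo (hU : IsOpen U) (hUab : U ⊆ Ioo a b) :
    ⋃ p : {p : X × X | IsMaximalIoo U p.1 p.2}, Ioo p.1.1 p.1.2 = U := by
  refine (iUnion_subset fun p ↦ p.2.Ioo_subset).antisymm fun x hx ↦ ?_
  obtain ⟨α, β, hαβ, hxαβ⟩ := exists_isMaximalIoo_mem hU hUab hx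
  exact mem_iUnion.2 ⟨⟨(α, β), hαβ⟩, hxαβ⟩

variable [DenselyOrdered X] [SecondCountableTopology X] [MeasurableSpace X]
  [OpensMeasurableSpace X] {μ : Measure X} {f g : X → ℝ}

lemma hasSum_setIntegral_isMaximalIoo (hU : IsOpen U) (hUab : U ⊆ Ioo a b)
    (hf : IntegrableOn f U μ) :
    HasSum (fun p : {p : X × X | IsMaximalIoo U p.1 p.2} ↦ ∫ x in Ioo p.1.1 p.1.2, f x ∂μ)
      (∫ x in U, f x ∂μ) := by
  have hdisj := pairwiseDisjoint_Ioo_isMaximalIoo U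
  have : Countable {p : X × X | IsMaximalIoo U p.1 p.2} :=
    (hdisj.countable_of_isOpen (fun _ _ ↦ isOpen_Ioo)
      fun p hp ↦ nonempty_Ioo.2 hp.lt).to_subtype
  have hsum := hasSum_integral_iUnion (μ := μ) (f := f)
    (fun p : {p : X × X | IsMaximalIoo U p.1 p.2} ↦ measurableSet_Ioo (a := p.1.1) (b := p.1.2))
    hdisj.subtype (by rwa [iUnion_Ioo_isMaximalIoo hU hUab])
  rwa [iUnion_Ioo_isMaximalIoo hU hUab] at hsum

lemma setIntegral_mono_of_isMaximalIoo (hU : IsOpen U) (hUab : U ⊆ Ioo a b)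
    (hf : IntegrableOn f U μ) (hg : IntegrableOn g U μ)
    (hfg : ∀ α β, IsMaximalIoo U α β → ∫ x in Ioo α β, f x ∂μ ≤ ∫ x in Ioo α β, g x ∂μ) :
    ∫ x in U, f x ∂μ ≤ ∫ x in U, g x ∂μ := by
  have hf_sum := hasSum_setIntegral_isMaximalIoo hU hUab hf
  have hg_sum := hasSum_setIntegral_isMaximalIoo hU hUab hg
  exact hasSum_le (fun p ↦ hfg _ _ p.2) hf_sum hg_sum

lemma HasMeanVarianceLE.of_isMaximalIoo {φ : X → ℝ} {l ε : ℝ} (hU : IsOpen U)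
    (hUab : U ⊆ Ioo a b) (hUfin : μ U ≠ ⊤) (hφ : MemLp φ 2 (μ.restrict U))
    (h : ∀ α β, IsMaximalIoo U α β → HasMeanVarianceLE μ φ l ε (Ioo α β)) :
    HasMeanVarianceLE μ φ l ε U := by
  have := isFiniteMeasure_restrict.2 hUfin
  have hint : IntegrableOn φ U μ := hφ.integrable one_le_two
  have hconst (c : ℝ) : IntegrableOn (fun _ ↦ c) U μ := integrable_const c
  have hconst_eq (c : ℝ) (P : Set X) : ∫ _ in P, c ∂μ = c * μ.real P := by
    rw [setIntegral_const, smul_eq_mul, mul_comm]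
  refine ⟨hU.measurableSet, hUfin, hφ, ?_, ?_⟩
  · rw [← hconst_eq]
    have hIoo α β (hαβ : IsMaximalIoo U α β) : ∫ x in Ioo α β, φ x ∂μ = ∫ _ in Ioo α β, l ∂μ := by
      rw [(h α β hαβ).setIntegral_eq, hconst_eq]
    exact le_antisymm
      (setIntegral_mono_of_isMaximalIoo hU hUab hint (hconst l) fun α β hαβ ↦ (hIoo α β hαβ).le)
      (setIntegral_mono_of_isMaximalIoo hU hUab (hconst l) hint fun α β hαβ ↦ (hIoo α β hαβ).ge)
  · rw [← hconst_eq]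
    exact setIntegral_mono_of_isMaximalIoo hU hUab hφ.integrable_sq (hconst _) fun α β hαβ ↦
      (h α β hαβ).setIntegral_sq_le.trans_eq (hconst_eq _ _).symm

end MaximalIntervalIntegral

section RisingSun

variable {X Y : Type*} [LinearOrder X] [LinearOrder Y] {F G : X → Y} {a b t s : X}

/-- The points of `(a, b)` lying to the left of a point at which `F` is larger, or is at least
`F a`. For continuous `F`, if `s` is the last point of `[a, b]` with `F a ≤ F s`, this is `(a, s)`
together with the set of F. Riesz's rising sun lemma for `F` on `(s, b)`. -/
def risingSunSet (F : X → Y) (a b : X) : Set X :=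
  {t ∈ Ioo a b | ∃ s ∈ Ioc t b, F t < F s ∨ F a ≤ F s}

lemma risingSunSet_subset_Ioo : risingSunSet F a b ⊆ Ioo a b := fun _ ht ↦ ht.1

lemma risingSunSet_eq_Ioo (h : F a ≤ F b) : risingSunSet F a b = Ioo a b :=
  risingSunSet_subset_Ioo.antisymm fun _ ht ↦ ⟨ht, b, right_mem_Ioc.2 ht.2, .inr h⟩

lemma risingSunSet_subset_risingSunSet [AddCommGroup Y] [IsOrderedAddMonoid Y]
    (h : MonotoneOn (G - F) (Icc a b)) : risingSunSet F a b ⊆ risingSunSet G a b := by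
  have hincr {t s} (hat : a ≤ t) (hs : s ∈ Ioc t b) : F s - F t ≤ G s - G t := by
    have hGF : G t - F t ≤ G s - F s :=
      h ⟨hat, hs.1.le.trans hs.2⟩ ⟨hat.trans hs.1.le, hs.2⟩ hs.1.le
    rwa [sub_le_sub_iff, add_comm, ← sub_le_sub_iff]
  rintro t ⟨ht, s, hs, hts | has⟩
  · exact ⟨ht, s, hs, .inl (sub_pos.1 ((sub_pos.2 hts).trans_le (hincr ht.1.le hs)))⟩
  · exact ⟨ht, s, hs, .inr (sub_nonneg.1 ((sub_nonneg.2 has).trans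
      (hincr le_rfl ⟨ht.1.trans hs.1, hs.2⟩)))⟩

lemma le_of_notMem_risingSunSet (ht : t ∈ Ioo a b) (htU : t ∉ risingSunSet F a b)
    (hs : s ∈ Ioc t b) : F s ≤ F t ∧ F s < F a := by
  by_contra! h
  exact htU ⟨ht, s, hs, (lt_or_ge (F t) (F s)).imp_right h⟩

variable [TopologicalSpace X] [TopologicalSpace Y] [OrderTopology X] [OrderClosedTopology Y]

lemma isOpen_risingSunSet (hF : ContinuousOn F (Icc a b)) : IsOpen (risingSunSet F a b) := by
  refine isOpen_iff_mem_nhds.2 fun t ⟨ht, s, hs, h⟩ ↦ ?_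
  have hcont : ContinuousAt F t := hF.continuousAt (Icc_mem_nhds ht.1 ht.2)
  have hlt : ∀ᶠ t' in 𝓝 t, F t' < F s ∨ F a ≤ F s :=
    h.elim (fun h ↦ (hcont.eventually_lt_const h).mono fun _ ↦ .inl)
      fun h ↦ .of_forall fun _ ↦ .inr h
  filter_upwards [Ioo_mem_nhds ht.1 ht.2, Iio_mem_nhds hs.1, hlt] with t' ht' hs' h'
  exact ⟨ht', s, ⟨hs', hs.2⟩, h'⟩

end RisingSun

section RisingSunEndpoints

variable {X Y : Type*} [ConditionallyCompleteLinearOrder X] [DenselyOrdered X] [TopologicalSpace X]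
  [OrderTopology X] [LinearOrder Y] [TopologicalSpace Y] [OrderClosedTopology Y]
  {F : X → Y} {a b t α β : X}

lemma IsMaximalIoo.min_le_apply_right (hF : ContinuousOn F (Icc a b))
    (h : IsMaximalIoo (risingSunSet F a b) α β) (ht : t ∈ Ioo α β) : min (F t) (F a) ≤ F β := by
  obtain ⟨haα, hβb⟩ := h.le_and_le risingSunSet_subset_Ioo
  set m := min (F t) (F a)
  have hclosed : IsClosed (Icc t β ∩ F ⁻¹' Ici m) :=
    (hF.mono (Icc_subset_Icc (haα.trans ht.1.le) hβb)).preimage_isClosed_of_isClosed isClosed_Icc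
      isClosed_Ici
  obtain ⟨s, ⟨hs, hms⟩, hs_max⟩ := (isCompact_Icc.of_isClosed_subset hclosed
    inter_subset_left).exists_isGreatest ⟨t, left_mem_Icc.2 ht.2.le, min_le_left _ _⟩
  suffices hsβ : s = β from hsβ ▸ hms
  by_contra hne
  have hsβ : s < β := hs.2.lt_of_ne hne
  obtain ⟨-, r, hr, hrs⟩ := h.Ioo_subset ⟨ht.1.trans_le hs.1, hsβ⟩
  have hmr : m ≤ F r := hrs.elim (fun h ↦ hms.trans h.le) fun h ↦ (min_le_right _ _).trans h
  rcases le_or_gt r β with hrβ | hβr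
  · exact (hs_max ⟨⟨hs.1.trans hr.1.le, hrβ⟩, hmr⟩).not_gt hr.1
  · have hβ : β ∈ Ioo a b := ⟨haα.trans_lt h.lt, hβr.trans_le hr.2⟩
    have hrβ := (le_of_notMem_risingSunSet hβ h.right_notMem ⟨hβr, hr.2⟩).1
    exact (hs_max ⟨right_mem_Icc.2 ht.2.le, hmr.trans hrβ⟩).not_gt hsβ

lemma le_apply_left_of_notMem_risingSunSet (hF : ContinuousOn F (Icc a b)) (hFab : F b ≤ F a)
    (ht : t ∈ Icc a b) (htU : t ∉ risingSunSet F a b) : F t ≤ F a := by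
  rcases ht.1.eq_or_lt with rfl | hat
  · exact le_rfl
  rcases ht.2.eq_or_lt with rfl | htb
  · exact hFab
  have hsub : Ioo t b ⊆ Icc a b := fun s hs ↦ ⟨hat.le.trans hs.1.le, hs.2.le⟩
  refine ((hF t ht).mono hsub).closure_le ?_ continuousWithinAt_const fun s hs ↦
    (le_of_notMem_risingSunSet ⟨hat, htb⟩ htU (Ioo_subset_Ioc_self hs)).2.le
  rw [closure_Ioo htb.ne]
  exact left_mem_Icc.2 htb.le

lemma IsMaximalIoo.apply_left_eq_apply_right (hF : ContinuousOn F (Icc a b)) (hFab : F b ≤ F a)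
    (h : IsMaximalIoo (risingSunSet F a b) α β) : F α = F β := by
  obtain ⟨haα, hβb⟩ := h.le_and_le risingSunSet_subset_Ioo
  have hα : α ∈ Icc a b := ⟨haα, h.lt.le.trans hβb⟩
  have hFα : F α ≤ F a := le_apply_left_of_notMem_risingSunSet hF hFab hα h.left_notMem
  have hFβ : F β ≤ F a := le_apply_left_of_notMem_risingSunSet hF hFab
    ⟨haα.trans h.lt.le, hβb⟩ h.right_notMem
  refine le_antisymm ?_ ?_
  · have hmin : min (F α) (F a) ≤ F β := by
      have hcont : ContinuousWithinAt F (Ioo α β) α :=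
        (hF α hα).mono (Ioo_subset_Icc_self.trans (Icc_subset_Icc haα hβb))
      have hcont_min : ContinuousWithinAt (fun t ↦ min (F t) (F a)) (Ioo α β) α :=
        hcont.min continuousWithinAt_const
      refine hcont_min.closure_le ?_ continuousWithinAt_const fun t ht ↦ h.min_le_apply_right hF ht
      rw [closure_Ioo h.lt.ne]
      exact left_mem_Icc.2 h.lt.le
    rwa [min_eq_left hFα] at hmin
  · rcases haα.eq_or_lt with rfl | haα
    · exact hFβ
    · exact (le_of_notMem_risingSunSet ⟨haα, h.lt.trans_le hβb⟩ h.left_notMem ⟨h.lt, hβb⟩).1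

end RisingSunEndpoints

section RisingSunLevelSet

variable {φ : ℝ → ℝ} {a b c d l ε : ℝ}

lemma avg_eq_setAverage_Ioo (f : ℝ → ℝ) (hcd : c ≤ d) : avg f c d = ⨍ x in Ioo c d, f x := by
  rw [avg, ← interval_average_eq_div, uIoc_of_le hcd, restrict_Ioo_eq_restrict_Ioc]

lemma setIntegral_Ioo_eq_avg_mul (f : ℝ → ℝ) (hcd : c ≤ d) :
    ∫ x in Ioo c d, f x = avg f c d * volume.real (Ioo c d) := by
  rw [avg_eq_setAverage_Ioo f hcd, mul_comm, ← smul_eq_mul,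
    measure_smul_setAverage f measure_Ioo_lt_top.ne]

lemma BMOe.memLp (hφ : BMOe ε a b φ) : MemLp φ 2 (volume.restrict (Ioo a b)) :=
  (memLp_two_iff_integrable_sq (hφ.1.1.mono_set Ioo_subset_Ioc_self).1).2
    (hφ.2.1.1.mono_set Ioo_subset_Ioc_self)

lemma BMOe.hasMeanVarianceLE_Ioo (hφ : BMOe ε a b φ) (hac : a ≤ c) (hcd : c < d) (hdb : d ≤ b) :
    HasMeanVarianceLE volume φ (avg φ c d) ε (Ioo c d) where
  measurableSet := measurableSet_Ioo
  measure_ne_top := measure_Ioo_lt_top.ne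
  memLp := hφ.memLp.mono_measure (Measure.restrict_mono (Ioo_subset_Ioo hac hdb) le_rfl)
  setIntegral_eq := setIntegral_Ioo_eq_avg_mul φ hcd.le
  setIntegral_sq_le := by
    rw [setIntegral_Ioo_eq_avg_mul _ hcd.le]
    gcongr
    linarith [hφ.2.2 c d hac hcd hdb]

/-- The primitive of `φ - l` vanishing at `a`, used to locate the intervals on which `φ` has mean
`l`. The constant is integrated explicitly, so that the dependence on `l` is plain whether or not
`φ` is integrable. -/
noncomputable def primitiveSub (φ : ℝ → ℝ) (a l t : ℝ) : ℝ := (∫ x in a..t, φ x) - l * (t - a)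

lemma primitiveSub_self (φ : ℝ → ℝ) (a l : ℝ) : primitiveSub φ a l a = 0 := by
  simp [primitiveSub]

lemma primitiveSub_eq_avg_sub_mul (φ : ℝ → ℝ) (l : ℝ) (hab : a ≠ b) :
    primitiveSub φ a l b = (avg φ a b - l) * (b - a) := by
  rw [primitiveSub, avg, sub_mul, div_mul_cancel₀ _ (sub_ne_zero.2 hab.symm)]

lemma primitiveSub_sub_primitiveSub (hφ : IntervalIntegrable φ volume a b) (hc : c ∈ uIcc a b)
    (hd : d ∈ uIcc a b) (l : ℝ) :
    primitiveSub φ a l d - primitiveSub φ a l c = primitiveSub φ c l d := by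
  have hac := hφ.mono_set (uIcc_subset_uIcc left_mem_uIcc hc)
  have had := hφ.mono_set (uIcc_subset_uIcc left_mem_uIcc hd)
  simp only [primitiveSub, ← intervalIntegral.integral_interval_sub_left had hac]
  ring

lemma avg_eq_of_primitiveSub_eq (hφ : IntervalIntegrable φ volume a b) (hc : c ∈ uIcc a b)
    (hd : d ∈ uIcc a b) (hcd : c ≠ d) (h : primitiveSub φ a l c = primitiveSub φ a l d) :
    avg φ c d = l := by
  have hmul : (avg φ c d - l) * (d - c) = 0 := by
    rw [← primitiveSub_eq_avg_sub_mul φ l hcd, ← primitiveSub_sub_primitiveSub hφ hc hd, h,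
      sub_self]
  exact sub_eq_zero.1 ((mul_eq_zero.1 hmul).resolve_right (sub_ne_zero.2 hcd.symm))

lemma continuousOn_primitiveSub (hφ : IntervalIntegrable φ volume a b) (l : ℝ) :
    ContinuousOn (primitiveSub φ a l) (uIcc a b) :=
  (intervalIntegral.continuousOn_primitive_interval' hφ left_mem_uIcc).sub (by fun_prop)

lemma hasDerivAt_nonpos_of_forall_Ioo_le {f : ℝ → ℝ} {f' x : ℝ} (hf : HasDerivAt f f' x)
    (hxb : x < b) (hle : ∀ y ∈ Ioo x b, f y ≤ f x) : f' ≤ 0 := by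
  have := left_nhdsWithin_Ioo_neBot hxb
  refine le_of_tendsto ((hasDerivWithinAt_iff_tendsto_slope' left_notMem_Ioo).1
    (hf.hasDerivWithinAt (s := Ioo x b))) ?_
  filter_upwards [self_mem_nhdsWithin] with y hy
  rw [slope_def_field]
  exact div_nonpos_of_nonpos_of_nonneg (sub_nonpos.2 (hle y hy)) (sub_nonneg.2 hy.1.le)

/-- The counterpart of the superlevel set `{φ > l}` in `(a, b)` furnished by the rising sun
construction for the primitive of `φ - l`. -/
def risingSunLevelSet (φ : ℝ → ℝ) (a b l : ℝ) : Set ℝ :=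
  risingSunSet (primitiveSub φ a l) a b

lemma risingSunLevelSet_avg (φ : ℝ → ℝ) (hab : a ≠ b) :
    risingSunLevelSet φ a b (avg φ a b) = Ioo a b :=
  risingSunSet_eq_Ioo (by simp [primitiveSub_self, primitiveSub_eq_avg_sub_mul φ _ hab])

lemma antitone_risingSunLevelSet (φ : ℝ → ℝ) (a b : ℝ) : Antitone (risingSunLevelSet φ a b) := by
  refine fun l l' hl ↦ risingSunSet_subset_risingSunSet fun s _ t _ hst ↦ ?_
  have hdiff (t : ℝ) : (primitiveSub φ a l - primitiveSub φ a l') t = (l' - l) * (t - a) := by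
    simp only [Pi.sub_apply, primitiveSub]
    ring
  rw [hdiff, hdiff]
  gcongr

lemma ae_le_of_notMem_risingSunLevelSet (hφ : IntervalIntegrable φ volume a b) (l : ℝ) :
    ∀ᵐ x, x ∈ Ioo a b \ risingSunLevelSet φ a b l → φ x ≤ l := by
  filter_upwards [hφ.ae_hasDerivAt_integral] with x hderiv ⟨hx, hxU⟩
  have hprim : HasDerivAt (primitiveSub φ a l) (φ x - l) x :=
    ((hderiv (mem_uIcc_of_le hx.1.le hx.2.le) a left_mem_uIcc).sub
      (((hasDerivAt_id x).sub_const a).const_mul l)).congr_deriv (by rw [mul_one])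
  exact sub_nonpos.1 (hasDerivAt_nonpos_of_forall_Ioo_le hprim hx.2 fun y hy ↦
    (le_of_notMem_risingSunSet hx hxU (Ioo_subset_Ioc_self hy)).1)

lemma BMOe.hasMeanVarianceLE_risingSunLevelSet (hφ : BMOe ε a b φ) (hab : a < b)
    (hl : avg φ a b ≤ l) : HasMeanVarianceLE volume φ l ε (risingSunLevelSet φ a b l) := by
  have hcont : ContinuousOn (primitiveSub φ a l) (Icc a b) := by
    simpa only [uIcc_of_le hab.le] using continuousOn_primitiveSub hφ.1 l
  have hsub : risingSunLevelSet φ a b l ⊆ Ioo a b := risingSunSet_subset_Ioo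
  refine .of_isMaximalIoo (isOpen_risingSunSet hcont) hsub
    (measure_ne_top_of_subset hsub measure_Ioo_lt_top.ne)
    (hφ.memLp.mono_measure (Measure.restrict_mono hsub le_rfl)) fun α β hαβ ↦ ?_
  obtain ⟨haα, hβb⟩ := hαβ.le_and_le hsub
  have hba : primitiveSub φ a l b ≤ primitiveSub φ a l a := by
    rw [primitiveSub_self, primitiveSub_eq_avg_sub_mul φ l hab.ne]
    exact mul_nonpos_of_nonpos_of_nonneg (sub_nonpos.2 hl) (sub_nonneg.2 hab.le)
  rw [← avg_eq_of_primitiveSub_eq hφ.1 (mem_uIcc_of_le haα (hαβ.lt.le.trans hβb))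
    (mem_uIcc_of_le (haα.trans hαβ.lt.le) hβb) hαβ.lt.ne (hαβ.apply_left_eq_apply_right hcont hba)]
  exact hφ.hasMeanVarianceLE_Ioo haα hαβ.lt hβb

lemma BMOe.isMeanLevelFamily (hφ : BMOe ε a b φ) (hab : a < b) :
    IsMeanLevelFamily volume φ ε (avg φ a b) (risingSunLevelSet φ a b) where
  hasMeanVarianceLE _ hl := hφ.hasMeanVarianceLE_risingSunLevelSet hab hl
  antitoneOn := (antitone_risingSunLevelSet φ a b).antitoneOn _
  ae_le l hl := by
    have hmeas (l) (hl : avg φ a b ≤ l) : MeasurableSet (risingSunLevelSet φ a b l) :=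
      (hφ.hasMeanVarianceLE_risingSunLevelSet hab hl).measurableSet
    rw [ae_restrict_iff' ((hmeas _ le_rfl).diff (hmeas l hl)), risingSunLevelSet_avg φ hab.ne]
    exact ae_le_of_notMem_risingSunLevelSet hφ.1 l

end RisingSunLevelSet

section IntegralJohnNirenberg

variable {φ : ℝ → ℝ} {a b ε δ : ℝ}

theorem BMOe.intervalIntegrable_exp_and_avg_exp_le_Bp (hφ : BMOe ε a b φ) (hab : a < b)
    (hε : 0 ≤ ε) (hεδ : ε < δ) (hδ1 : δ < 1) :
    IntervalIntegrable (fun t ↦ exp (φ t)) volume a b ∧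
      avg (fun t ↦ exp (φ t)) a b ≤ Bp δ (avg φ a b, avg (fun t ↦ φ t ^ 2) a b) := by
  have h := (hφ.isMeanLevelFamily hab).integrableOn_exp_and_setIntegral_le_bellmanMass hε hεδ hδ1
  rw [risingSunLevelSet_avg φ hab.ne, bellmanMass, ← avg_eq_setAverage_Ioo _ hab.le,
    setIntegral_Ioo_eq_avg_mul _ hab.le, mul_comm (avg _ a b)] at h
  have hpos : 0 < volume.real (Ioo a b) := by
    rw [volume_real_Ioo_of_le hab.le]
    exact sub_pos.2 hab
  exact ⟨(intervalIntegrable_iff_integrableOn_Ioo_of_le hab.le).2 h.1,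
    le_of_mul_le_mul_left h.2 hpos⟩

end IntegralJohnNirenberg

/-- Upper Bellman estimate in the continuous case: for `φ ∈ BMO_ε(I)` with
`0 < ε < 1`, the average of `e^φ` is at most `B⁺_ε(⟨φ⟩_I, ⟨φ²⟩_I)`. -/
theorem stmt8 (ε : ℝ) (hε0 : 0 < ε) (hε1 : ε < 1) (a b : ℝ) (hab : a < b)
    (φ : ℝ → ℝ) (hφ : BMOe ε a b φ) :
    IntervalIntegrable (fun t => Real.exp (φ t)) volume a b ∧
    avg (fun t => Real.exp (φ t)) a b ≤
      Bp ε (avg φ a b, avg (fun t => (φ t) ^ 2) a b) := by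
  have hδ (δ : ℝ) (h : δ ∈ Ioo ε 1) :=
    hφ.intervalIntegrable_exp_and_avg_exp_le_Bp hab hε0.le h.1 h.2
  obtain ⟨δ₀, hδ₀⟩ := exists_between hε1
  have hlim := (continuousAt_Bp hε1.ne (avg φ a b, avg (fun t => (φ t) ^ 2) a b)).tendsto.mono_left
    (nhdsWithin_le_nhds (s := Ioi ε))
  refine ⟨(hδ δ₀ hδ₀).1, ge_of_tendsto hlim ?_⟩
  filter_upwards [Ioo_mem_nhdsGT hε1] with δ h using (hδ δ h).2
end
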